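/- arXiv:1906.03296 — 2 statements merged into one kernel-verified Lean document; each statement's English description precedes it below -/
import Mathlib

section
/- Let q ≥ 4, let B be a Baer subplane of PG(2,q²) tangent to ℓ∞ at the point T̄ = B ∩ ℓ∞, and let C be an F_q-conic contained in B with T̄ ∈ C. Then C is contained in exactly one ℓ∞-Baer pencil 𝒦, and the vertex of 𝒦 is a point of C⁺ ∩ ℓ∞ (where C⁺ is the unique F_{q²}-conic containing C). -/
open scoped Classical
open Matrix

noncomputable section

namespace BaerConics

/-- Points of the projective space `PG(n-1, K)` as projectivization of `Fin n → K`. -/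
abbrev PP (K : Type) [Field K] (n : ℕ) : Type := Projectivization K (Fin n → K)

variable {K : Type} [Field K] {m n : ℕ}

/-- The (at most one) projective point determined by a vector:  empty if `v = 0`,
and the singleton `{[v]}` otherwise. -/
def projPt (v : Fin n → K) : Set (PP K n) :=
  {p | ∃ h : v ≠ 0, p = Projectivization.mk K v h}

/-- The set of projective points lying in a linear subspace. -/
def ptsOf (W : Submodule K (Fin n → K)) : Set (PP K n) :=
  {p | p.rep ∈ W}

/-- The projective line through two points (as the set of points of the span). -/
def lineTh (P Q : PP K n) : Set (PP K n) :=
  ptsOf (Submodule.span K {P.rep, Q.rep})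

/-- `X` is a projective flat of projective dimension `d`. -/
def IsFlat (d : ℕ) (X : Set (PP K n)) : Prop :=
  ∃ W : Submodule K (Fin n → K), Module.finrank K W = d + 1 ∧ X = ptsOf W

/-- Image of a set of vectors under the projective map induced by a matrix. -/
def mimg (M : Matrix (Fin m) (Fin n) K) (X : Set (Fin n → K)) : Set (PP K m) :=
  {p | ∃ v ∈ X, p ∈ projPt (M.mulVec v)}

/-- Coordinatewise application of a ring homomorphism to a vector. -/
def mapVec {L : Type} [Field L] (σ : K →+* L) (v : Fin n → K) : Fin n → L :=
  fun i => σ (v i)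

lemma mulVec_inj (M : Matrix (Fin n) (Fin n) K) (hM : IsUnit M.det) :
    Function.Injective M.mulVec := by
  intro a b hab
  have h := congrArg (fun v => M⁻¹.mulVec v) hab
  simpa [Matrix.mulVec_mulVec, Matrix.nonsing_inv_mul M hM] using h

/-- The projective transformation induced by an invertible matrix. -/
def pmap (M : Matrix (Fin n) (Fin n) K) (hM : IsUnit M.det) (p : PP K n) : PP K n :=
  Projectivization.mk K (M.mulVec p.rep) (by
    intro h
    apply p.rep_nonzero
    have h0 : M.mulVec p.rep = M.mulVec 0 := by simpa [Matrix.mulVec_zero] using h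
    exact mulVec_inj M hM h0)

/-- The map induced on projective points by the coordinatewise `q`-power map. -/
def frobPt (q : ℕ) (p : PP K n) : PP K n :=
  Projectivization.mk K (fun i => p.rep i ^ q) (by
    obtain ⟨i, hi⟩ := Function.ne_iff.mp p.rep_nonzero
    intro h
    exact pow_ne_zero q (by simpa using hi) (by simpa using congrFun h i))

/-- The line at infinity `z = 0` of `PG(2, K)`. -/
def linf (K : Type) [Field K] : Set (PP K 3) := {p | p.rep 2 = 0}

/-- Coordinatewise application of the algebra map to a vector. -/
def algVec (F : Type) {K : Type} [Field F] [Field K] [Algebra F K] {n : ℕ}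
    (v : Fin n → F) : Fin n → K := fun i => algebraMap F K (v i)

/-- Vectors representing the points of the standard Baer subline of `ℓ∞`. -/
def sublineVecs (F K : Type) [Field F] [Field K] [Algebra F K] : Set (Fin 3 → K) :=
  {v | ∃ θ : F, v = ![algebraMap F K θ, 1, 0]} ∪ {![1, 0, 0]}

/-- Nonzero vectors representing the points of `ℓ∞`. -/
def linfVecs (K : Type) [Field K] : Set (Fin 3 → K) := {v | v ≠ 0 ∧ v 2 = 0}

/-- Vectors with all coordinates in (the image of) `F`, representing the canonical
Baer subplane. -/
def subplaneVecs (F K : Type) [Field F] [Field K] [Algebra F K] : Set (Fin 3 → K) :=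
  {v | ∃ w : Fin 3 → F, w ≠ 0 ∧ v = algVec F w}

/-- Vectors of the standard conic with parameters in `S`. -/
def conicVecs {K : Type} [Field K] (S : Set K) : Set (Fin 3 → K) :=
  {v | ∃ θ ∈ S, v = ![1, θ, θ ^ 2]} ∪ {![0, 0, 1]}

/-- `b` is a Baer subline of the line `ℓ` of `PG(2,q²)`. -/
def IsBaerSublineOf (F : Type) {K : Type} [Field F] [Field K] [Algebra F K]
    (b ℓ : Set (PP K 3)) : Prop :=
  ∃ M : Matrix (Fin 3) (Fin 3) K, IsUnit M.det ∧
    ℓ = mimg M (linfVecs K) ∧ b = mimg M (sublineVecs F K)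

/-- `B` is a Baer subplane of `PG(2,q²)`. -/
def IsBaerSubplane (F : Type) {K : Type} [Field F] [Field K] [Algebra F K]
    (B : Set (PP K 3)) : Prop :=
  ∃ M : Matrix (Fin 3) (Fin 3) K, IsUnit M.det ∧ B = mimg M (subplaneVecs F K)

/-- `C` is the image under `PGL(3,K)` of the standard conic with parameters in `S`. -/
def IsConicOver {K : Type} [Field K] (S : Set K) (C : Set (PP K 3)) : Prop :=
  ∃ M : Matrix (Fin 3) (Fin 3) K, IsUnit M.det ∧ C = mimg M (conicVecs S)

/-- An `F_q`-conic of `PG(2,q²)`: a nondegenerate conic of a Baer subplane. -/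
def IsFqConic (F : Type) {K : Type} [Field F] [Field K] [Algebra F K]
    (C : Set (PP K 3)) : Prop :=
  IsConicOver (Set.range (algebraMap F K)) C

/-- An `F_{q²}`-conic of `PG(2,q²)`: a nondegenerate conic. -/
def IsFq2Conic {K : Type} [Field K] (C : Set (PP K 3)) : Prop :=
  IsConicOver (Set.univ : Set K) C

/-- `𝒦` is an `ℓ∞`-Baer pencil with vertex `P`. -/
def IsLinfBaerPencil (F : Type) {K : Type} [Field F] [Field K] [Algebra F K]
    (𝒦 : Set (PP K 3)) (P : PP K 3) : Prop :=
  P ∈ linf K ∧ ∃ ℓ b : Set (PP K 3), IsBaerSublineOf F b ℓ ∧ P ∉ ℓ ∧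
    (∃! X, X ∈ b ∩ linf K) ∧ 𝒦 = ⋃ X ∈ b, lineTh P X

/-- `m` is a line of the Baer subplane `B`, with extension (full line) `ℓ`. -/
def IsLineOfExt {K : Type} [Field K] (q : ℕ) (B m ℓ : Set (PP K 3)) : Prop :=
  IsFlat 1 ℓ ∧ m = B ∩ ℓ ∧ m.ncard = q + 1

/-- `m` is a line of the Baer subplane `B`. -/
def IsLineOf {K : Type} [Field K] (q : ℕ) (B m : Set (PP K 3)) : Prop :=
  ∃ ℓ, IsLineOfExt q B m ℓ

/-- `P` and `Q` are conjugate with respect to the Baer subline `b` of `ℓ∞`. -/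
def ConjWrtSubline (F : Type) {K : Type} [Field F] [Field K] [Algebra F K]
    (q : ℕ) (b : Set (PP K 3)) (P Q : PP K 3) : Prop :=
  ∃ (M : Matrix (Fin 3) (Fin 3) K) (hM : IsUnit M.det),
    mimg M (linfVecs K) = linf K ∧ b = mimg M (sublineVecs F K) ∧
    ∃ P₀ : PP K 3, P = pmap M hM P₀ ∧ Q = pmap M hM (frobPt q P₀)

/-- A representative vector for the point `(δ,1,0)` (resp. `(1,0,0)`) of `ℓ∞`. -/
def ptInfVec {K : Type} [Field K] : Option K → Fin 3 → K
  | some δ => ![δ, 1, 0]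
  | none => ![1, 0, 0]

lemma ptInfVec_ne {K : Type} [Field K] (t : Option K) : ptInfVec t ≠ 0 := by
  cases t with
  | none => intro h; have h0 := congrFun h 0; simp [ptInfVec] at h0
  | some δ => intro h; have h0 := congrFun h 1; simp [ptInfVec] at h0

/-- The point of `ℓ∞` with parameter `δ ∈ K ∪ {∞}`. -/
def ptInf {K : Type} [Field K] (t : Option K) : PP K 3 :=
  Projectivization.mk K (ptInfVec t) (ptInfVec_ne t)

/-- The hyperplane at infinity `z = 0` of `PG(4, F)`. -/
def sinf (F : Type) [Field F] : Set (PP F 5) := {p | p.rep 4 = 0}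

/-- Affine coordinates of the Bruck-Bose image of an affine point of `PG(2,q²)`. -/
def bbVec {F K : Type} [Field F] [Field K] (c0 c1 : K → F) (p : PP K 3) : Fin 5 → F :=
  ![c0 (p.rep 0 / p.rep 2), c1 (p.rep 0 / p.rep 2),
    c0 (p.rep 1 / p.rep 2), c1 (p.rep 1 / p.rep 2), 1]

/-- The Bruck-Bose map (meaningful on affine points of `PG(2,q²)`). -/
def bb {F K : Type} [Field F] [Field K] (c0 c1 : K → F) (p : PP K 3) : PP F 5 :=
  Projectivization.mk F (bbVec c0 c1 p) (by
    intro h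
    have h4 := congrFun h 4
    simp [bbVec] at h4)

/-- First spanning vector of the spread line with parameter `δ ∈ K ∪ {∞}`. -/
def spreadV1 {F K : Type} [Field F] [Field K] (c0 c1 : K → F) : Option K → Fin 5 → F
  | some δ => ![c0 δ, c1 δ, 1, 0, 0]
  | none => ![1, 0, 0, 0, 0]

/-- Second spanning vector of the spread line with parameter `δ ∈ K ∪ {∞}`. -/
def spreadV2 {F K : Type} [Field F] [Field K] (c0 c1 : K → F) (t0 t1 : F) :
    Option K → Fin 5 → F
  | some δ => ![t0 * c1 δ, c0 δ + t1 * c1 δ, 0, 1, 0]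
  | none => ![0, 1, 0, 0, 0]

/-- The line of the regular spread `S` with parameter `δ ∈ K ∪ {∞}`. -/
def spreadLine {F K : Type} [Field F] [Field K] (c0 c1 : K → F) (t0 t1 : F)
    (t : Option K) : Set (PP F 5) :=
  ptsOf (Submodule.span F {spreadV1 c0 c1 t, spreadV2 c0 c1 t0 t1 t})

/-- The extension `[T]⋆` of a spread line to `PG(4,q²)`. -/
def extSpreadLine (F : Type) {K : Type} [Field F] [Field K] [Algebra F K]
    (c0 c1 : K → F) (t0 t1 : F) (t : Option K) : Set (PP K 5) :=
  ptsOf (Submodule.span K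
    {algVec F (spreadV1 c0 c1 t), algVec F (spreadV2 c0 c1 t0 t1 t)})

/-- The `K`-extension of an `F`-subspace. -/
def extSub (F : Type) {K : Type} [Field F] [Field K] [Algebra F K] {n : ℕ}
    (W : Submodule F (Fin n → F)) : Submodule K (Fin n → K) :=
  Submodule.span K (algVec F '' (W : Set (Fin n → F)))

def A0v {K : Type} [Field K] (τ : K) (q : ℕ) : Fin 5 → K := ![τ ^ q, -1, 0, 0, 0]
def A1v {K : Type} [Field K] (τ : K) (q : ℕ) : Fin 5 → K := ![0, 0, τ ^ q, -1, 0]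
def B0v {K : Type} [Field K] (τ : K) : Fin 5 → K := ![τ, -1, 0, 0, 0]
def B1v {K : Type} [Field K] (τ : K) : Fin 5 → K := ![0, 0, τ, -1, 0]

/-- The transversal line `g` of the regular spread, in `PG(4,q²)`. -/
def gline {K : Type} [Field K] (τ : K) (q : ℕ) : Set (PP K 5) :=
  ptsOf (Submodule.span K {A0v τ q, A1v τ q})

/-- The conjugate transversal line `g^q` of the regular spread, in `PG(4,q²)`. -/
def gqline {K : Type} [Field K] (τ : K) : Set (PP K 5) :=
  ptsOf (Submodule.span K {B0v τ, B1v τ})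

/-- Representative vector of the point `T = δA₀ + A₁` of `g`. -/
def gptVec {K : Type} [Field K] (τ : K) (q : ℕ) : Option K → Fin 5 → K
  | some δ => δ • A0v τ q + A1v τ q
  | none => A0v τ q

/-- Representative vector of the conjugate point `T^q = δ^q A₀^q + A₁^q` of `g^q`. -/
def gqptVec {K : Type} [Field K] (τ : K) (q : ℕ) : Option K → Fin 5 → K
  | some δ => δ ^ q • B0v τ + B1v τ
  | none => B0v τ

lemma gptVec_ne {K : Type} [Field K] (τ : K) (q : ℕ) (t : Option K) :
    gptVec τ q t ≠ 0 := by
  cases t with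
  | none =>
      intro h
      have := congrFun h 1
      simp [gptVec, A0v] at this
  | some δ =>
      intro h
      have := congrFun h 3
      simp [gptVec, A0v, A1v] at this

lemma gqptVec_ne {K : Type} [Field K] (τ : K) (q : ℕ) (t : Option K) :
    gqptVec τ q t ≠ 0 := by
  cases t with
  | none =>
      intro h
      have := congrFun h 1
      simp [gqptVec, B0v] at this
  | some δ =>
      intro h
      have := congrFun h 3
      simp [gqptVec, B0v, B1v] at this

/-- The point of `g` corresponding to the point of `ℓ∞` with parameter `δ ∈ K ∪ {∞}`. -/
def gpt {K : Type} [Field K] (τ : K) (q : ℕ) (t : Option K) : PP K 5 :=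
  Projectivization.mk K (gptVec τ q t) (gptVec_ne τ q t)

/-- The point of `g^q` conjugate to `gpt τ q t`. -/
def gqpt {K : Type} [Field K] (τ : K) (q : ℕ) (t : Option K) : PP K 5 :=
  Projectivization.mk K (gqptVec τ q t) (gqptVec_ne τ q t)

/-- Evaluation of the quadratic form with matrix `M` at `v`. -/
def qeval {K : Type} [Field K] {n : ℕ} (M : Matrix (Fin n) (Fin n) K) (v : Fin n → K) : K :=
  v ⬝ᵥ M.mulVec v

/-- Vectors of the standard twisted cubic (inside the hyperplane `x₄ = 0`)
with parameters in `S`. -/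
def tcVecs {K : Type} [Field K] (S : Set K) : Set (Fin 5 → K) :=
  {v | ∃ θ ∈ S, v = ![1, θ, θ ^ 2, θ ^ 3, 0]} ∪ {![0, 0, 0, 1, 0]}

/-- Vectors of the standard 4-dimensional normal rational curve with parameters in `S`. -/
def nrcVecs {K : Type} [Field K] (S : Set K) : Set (Fin 5 → K) :=
  {v | ∃ θ ∈ S, v = ![1, θ, θ ^ 2, θ ^ 3, θ ^ 4]} ∪ {![0, 0, 0, 0, 1]}

/-- `R` is a regulus of `Σ∞` in `PG(4,q)`. -/
def IsRegulus {F : Type} [Field F] (q : ℕ) (R : Set (Set (PP F 5))) : Prop :=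
  R.ncard = q + 1 ∧
  (∀ ℓ ∈ R, IsFlat 1 ℓ ∧ ℓ ⊆ sinf F) ∧
  (∀ ℓ ∈ R, ∀ ℓ' ∈ R, ℓ ≠ ℓ' → ℓ ∩ ℓ' = ∅) ∧
  (∀ mℓ : Set (PP F 5), IsFlat 1 mℓ → mℓ ⊆ sinf F →
    (∃ ℓ₁ ∈ R, ∃ ℓ₂ ∈ R, ∃ ℓ₃ ∈ R, ℓ₁ ≠ ℓ₂ ∧ ℓ₁ ≠ ℓ₃ ∧ ℓ₂ ≠ ℓ₃ ∧
      (mℓ ∩ ℓ₁).Nonempty ∧ (mℓ ∩ ℓ₂).Nonempty ∧ (mℓ ∩ ℓ₃).Nonempty) →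
    ∀ ℓ ∈ R, (mℓ ∩ ℓ).Nonempty)


section Helpers

variable {F K : Type} [Field F] [Field K] [Algebra F K]

lemma rep_mk_smul {n : ℕ} (v : Fin n → K) (h : v ≠ 0) :
    ∃ c : K, c ≠ 0 ∧ (Projectivization.mk K v h).rep = c • v := by
  obtain ⟨a, ha⟩ := Projectivization.exists_smul_eq_mk_rep K v h
  exact ⟨a, a.ne_zero, by rw [← ha]; rfl⟩

lemma eq_mk_of_rep {n : ℕ} (p : PP K n) (v : Fin n → K) (h : v ≠ 0) (c : K)
    (hp : p.rep = c • v) : p = Projectivization.mk K v h := by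
  rw [← p.mk_rep, Projectivization.mk_eq_mk_iff']
  exact ⟨c, hp.symm⟩

lemma eq_of_rep {n : ℕ} (p r : PP K n) (c : K) (hp : p.rep = c • r.rep) : p = r := by
  rw [eq_mk_of_rep p r.rep r.rep_nonzero c hp, r.mk_rep]

lemma mem_mimg {m n : ℕ} (M : Matrix (Fin m) (Fin n) K) (X : Set (Fin n → K)) (p : PP K m) :
    p ∈ mimg M X ↔ ∃ v ∈ X, ∃ c : K, c ≠ 0 ∧ p.rep = c • M.mulVec v := by
  constructor
  · rintro ⟨v, hv, h, rfl⟩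
    exact ⟨v, hv, rep_mk_smul _ h⟩
  · rintro ⟨v, hv, c, hc, h⟩
    have h0 : M.mulVec v ≠ 0 := by
      intro h0
      rw [h0, smul_zero] at h
      exact p.rep_nonzero h
    exact ⟨v, hv, h0, eq_mk_of_rep _ _ _ c h⟩

lemma smul_mv (M : Matrix (Fin 3) (Fin 3) K) (d : K) (v w : Fin 3 → K) (h : v = w) :
    d • M.mulVec v = d • M.mulVec w := by rw [h]

lemma smul_mv2 (M : Matrix (Fin 3) (Fin 3) K) (d k : K) (v w : Fin 3 → K) (h : v = k • w) :
    d • M.mulVec v = (d * k) • M.mulVec w := by rw [h, Matrix.mulVec_smul, mul_smul]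

lemma mulVec3 (M : Matrix (Fin 3) (Fin 3) K) (x y z : K) :
    M.mulVec ![x, y, z] = x • M.mulVec ![1,0,0] + y • M.mulVec ![0,1,0] + z • M.mulVec ![0,0,1] := by
  ext i
  simp [Matrix.mulVec, dotProduct, Fin.sum_univ_three]
  ring

lemma mulVec_eq_zero (M : Matrix (Fin 3) (Fin 3) K) (hM : IsUnit M.det) (v : Fin 3 → K)
    (h : M.mulVec v = 0) : v = 0 := mulVec_inj M hM (by simpa using h)

lemma exists_pre (M : Matrix (Fin 3) (Fin 3) K) (hM : IsUnit M.det) (v : Fin 3 → K) :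
    ∃ x y z, v = M.mulVec ![x, y, z] := by
  refine ⟨M⁻¹.mulVec v 0, M⁻¹.mulVec v 1, M⁻¹.mulVec v 2, ?_⟩
  have : ![M⁻¹.mulVec v 0, M⁻¹.mulVec v 1, M⁻¹.mulVec v 2] = M⁻¹.mulVec v := by
    ext i; fin_cases i <;> rfl
  rw [this, Matrix.mulVec_mulVec, Matrix.mul_nonsing_inv M hM, Matrix.one_mulVec]

lemma cubic_zero [Fintype F] (h4 : 4 ≤ Fintype.card F) (a b c d : K)
    (h : ∀ θ : F, a + b * algebraMap F K θ + c * algebraMap F K θ ^ 2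
      + d * algebraMap F K θ ^ 3 = 0) (x : K) : a + b * x + c * x ^ 2 + d * x ^ 3 = 0 := by
  have := Polynomial.eq_zero_of_natDegree_lt_card_of_eval_eq_zero
    (Polynomial.C a + Polynomial.C b * Polynomial.X + Polynomial.C c * Polynomial.X ^ 2
      + Polynomial.C d * Polynomial.X ^ 3) (f := algebraMap F K) (algebraMap F K).injective
    (by intro i; simpa using h i)
    (lt_of_le_of_lt (by compute_degree) (lt_of_lt_of_le (by norm_num : 3 < 4) h4))
  have h2 := congrArg (Polynomial.eval x) this
  simpa using h2

lemma fixed_mem [Fintype F] (x : K) (hx : x ^ Fintype.card F = x) :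
    ∃ u : F, algebraMap F K u = x := by
  by_contra hne
  push Not at hne
  have hc : 1 < Fintype.card F := Fintype.one_lt_card
  have := Polynomial.eq_zero_of_natDegree_lt_card_of_eval_eq_zero
    (Polynomial.X ^ Fintype.card F - Polynomial.X : Polynomial K)
    (f := fun o : Option F => o.elim x (algebraMap F K))
    (by
      rintro (_ | i) (_ | j) h
      · rfl
      · exact absurd h.symm (hne j)
      · exact absurd h (hne i)
      · exact congrArg some ((algebraMap F K).injective h))
    (by
      rintro (_ | i)
      · simp [hx]
      · simp [← map_pow, FiniteField.pow_card])
    (by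
      rw [FiniteField.X_pow_card_sub_X_natDegree_eq K hc]
      simp)
  exact FiniteField.X_pow_card_sub_X_ne_zero K hc this

lemma exists_conj (F K : Type) [Field F] [Field K] [Algebra F K] [Fintype F] :
    ∃ σ : K →+* K, (∀ u : F, σ (algebraMap F K u) = algebraMap F K u) ∧
      ∀ x, σ x = x → ∃ u : F, algebraMap F K u = x :=
  ⟨(FiniteField.frobeniusAlgHom F K : K →+* K), fun u => by simp,
    fun x hx => fixed_mem x (by simpa using hx)⟩

lemma core [Fintype F] (h4 : 4 ≤ Fintype.card F) (δ m0 m1 m2 : K)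
    (hδ : ∀ u : F, algebraMap F K u ≠ δ)
    (h : ∀ θ : F, ∃ u : F, m0 + m1 * algebraMap F K θ + m2 * algebraMap F K θ ^ 2
      = algebraMap F K u * (algebraMap F K θ - δ)) :
    ∃ r s : F, m0 = - δ * algebraMap F K r ∧
      m1 = algebraMap F K r - δ * algebraMap F K s ∧ m2 = algebraMap F K s := by
  obtain ⟨σ, hσ, hfix⟩ := exists_conj F K
  have hne : δ - σ δ ≠ 0 := by
    intro h0
    obtain ⟨u, hu⟩ := hfix δ (sub_eq_zero.mp h0).symm
    exact hδ u hu
  have hz := cubic_zero (F := F) h4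
    (-(m0 * σ δ) + σ m0 * δ) (m0 - m1 * σ δ - σ m0 + σ m1 * δ)
    (m1 - m2 * σ δ - σ m1 + σ m2 * δ) (m2 - σ m2) (by
      intro θ
      obtain ⟨u, hu⟩ := h θ
      have hu2 := congrArg σ hu
      simp only [map_add, map_mul, map_pow, map_sub, hσ] at hu2
      linear_combination (algebraMap F K θ - σ δ) * hu - (algebraMap F K θ - δ) * hu2) δ
  have hm : m0 + m1 * δ + m2 * δ ^ 2 = 0 := by
    have : (m0 + m1 * δ + m2 * δ ^ 2) * (δ - σ δ) = 0 := by linear_combination hz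
    exact (mul_eq_zero.mp this).resolve_right hne
  have hu : ∀ θ : F, ∃ u : F, algebraMap F K u = (m1 + m2 * δ) + m2 * algebraMap F K θ := by
    intro θ
    obtain ⟨u, hu⟩ := h θ
    refine ⟨u, ?_⟩
    have h1 : algebraMap F K θ - δ ≠ 0 := sub_ne_zero.mpr (hδ θ)
    apply mul_right_cancel₀ h1
    linear_combination hm - hu
  obtain ⟨r, hr⟩ := hu 0
  obtain ⟨r1, hr1⟩ := hu 1
  simp only [map_zero, map_one, mul_zero, add_zero, mul_one] at hr hr1
  refine ⟨r, r1 - r, ?_, ?_, ?_⟩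
  · rw [hr]; linear_combination hm
  · rw [map_sub, hr, hr1]; ring
  · rw [map_sub, hr, hr1]; ring

lemma linf_iff (p : PP K 3) : p ∈ linf K ↔ p.rep 2 = 0 := Iff.rfl

lemma conic_through (C : Set (PP K 3)) (hC : IsFqConic F C) (T : PP K 3) (hT : T ∈ C) :
    ∃ M : Matrix (Fin 3) (Fin 3) K, IsUnit M.det ∧
      C = mimg M (conicVecs (Set.range (algebraMap F K))) ∧
      ∃ c : K, c ≠ 0 ∧ T.rep = c • M.mulVec ![0,0,1] := by
  obtain ⟨M, hM, rfl⟩ := hC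
  rw [mem_mimg] at hT
  obtain ⟨v, hv | hv, c, hc, hT⟩ := hT
  · obtain ⟨_, ⟨t, rfl⟩, rfl⟩ := hv
    set t' := algebraMap F K t with ht'
    let S : Matrix (Fin 3) (Fin 3) K := !![0,0,1; 0,1,t'; 1,2*t',t'^2]
    have hS : S.det = -1 := by simp [S, Matrix.det_fin_three]
    have hSv : ∀ x y z, S.mulVec ![x,y,z] = ![z, y + t' * z, x + 2*t'*y+t'^2*z] := by
      intro x y z
      ext i
      fin_cases i <;> simp [S, Matrix.mulVec, dotProduct, Fin.sum_univ_three]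
    refine ⟨M * S, by rw [Matrix.det_mul, hS]; exact hM.mul (by simp), ?_, c, hc, ?_⟩
    · ext p
      rw [mem_mimg, mem_mimg]
      constructor
      · rintro ⟨v, hv | hv, d, hd, hp⟩
        · obtain ⟨_, ⟨u, rfl⟩, rfl⟩ := hv
          by_cases hut : u = t
          · subst hut
            refine ⟨_, Or.inr rfl, d, hd, ?_⟩
            rw [hp, ← Matrix.mulVec_mulVec, hSv]
            apply smul_mv
            ext i; fin_cases i <;> simp [t']
          · have hne : algebraMap F K u - t' ≠ 0 := by
              rw [ht', ← map_sub]
              simpa [sub_eq_zero] using hut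
            refine ⟨_, Or.inl ⟨_, ⟨(u - t)⁻¹, rfl⟩, rfl⟩, d * (algebraMap F K u - t')^2,
              mul_ne_zero hd (pow_ne_zero _ hne), ?_⟩
            rw [hp, ← Matrix.mulVec_mulVec, hSv]
            apply smul_mv2
            ext i; fin_cases i <;> simp [← ht'] <;> field_simp <;> ring
        · rw [Set.mem_singleton_iff] at hv
          subst hv
          refine ⟨_, Or.inl ⟨_, ⟨0, rfl⟩, rfl⟩, d, hd, ?_⟩
          rw [hp, ← Matrix.mulVec_mulVec, hSv]
          apply smul_mv
          ext i; fin_cases i <;> simp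
      · rintro ⟨v, hv | hv, d, hd, hp⟩
        · obtain ⟨_, ⟨u, rfl⟩, rfl⟩ := hv
          rw [← Matrix.mulVec_mulVec, hSv] at hp
          by_cases hu : u = 0
          · subst hu
            refine ⟨_, Or.inr rfl, d, hd, ?_⟩
            rw [hp]
            apply smul_mv
            ext i; fin_cases i <;> simp
          · have hne : algebraMap F K u ≠ 0 := by simpa using hu
            refine ⟨_, Or.inl ⟨_, ⟨t + u⁻¹, rfl⟩, rfl⟩, d * (algebraMap F K u)^2,
              mul_ne_zero hd (pow_ne_zero _ hne), ?_⟩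
            rw [hp]
            apply smul_mv2
            ext i; fin_cases i <;> simp [← ht'] <;> field_simp <;> ring
        · rw [Set.mem_singleton_iff] at hv
          subst hv
          rw [← Matrix.mulVec_mulVec, hSv] at hp
          refine ⟨_, Or.inl ⟨_, ⟨t, rfl⟩, rfl⟩, d, hd, ?_⟩
          rw [hp]
          apply smul_mv
          ext i; fin_cases i <;> simp [t']
    · rw [hT, ← Matrix.mulVec_mulVec, hSv]
      apply smul_mv
      ext i; fin_cases i <;> simp
  · rw [Set.mem_singleton_iff] at hv
    subst hv
    exact ⟨M, hM, rfl, c, hc, hT⟩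

lemma mk_mem_conic (M : Matrix (Fin 3) (Fin 3) K) (hM : IsUnit M.det) (S : Set K) (θ : K)
    (hθ : θ ∈ S) : ∃ p ∈ mimg M (conicVecs S), ∃ c : K, c ≠ 0 ∧
      p.rep = c • M.mulVec ![1, θ, θ ^ 2] := by
  have h0 : M.mulVec ![1, θ, θ ^ 2] ≠ 0 := by
    intro h
    have := congrFun (mulVec_eq_zero M hM _ h) 0
    simp at this
  exact ⟨Projectivization.mk K _ h0, ⟨_, Or.inl ⟨θ, hθ, rfl⟩, h0, rfl⟩, rep_mk_smul _ h0⟩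


lemma normal_form (P g h : Fin 3 → K)
    (hind : ∀ a x y : K, a • P + x • g + y • h = 0 → a = 0 ∧ x = 0 ∧ y = 0)
    (hP : P 2 = 0) (hg : g 2 = 0) :
    ∃ μ : (Fin 3 → K) →ₗ[K] K, (∀ v, μ v = 0 → v 2 = 0 → ∃ c : K, v = c • P) ∧
      ∀ v, (∃ (a k : K) (s t : F), v = a • P + k • (algebraMap F K s • g + algebraMap F K t • h)) ↔
        (v 2 = 0 ∨ ∃ u : F, μ v = algebraMap F K u * v 2) := by
  let G : Matrix (Fin 3) (Fin 3) K := (Matrix.of ![P, g, h])ᵀ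
  have hGv : ∀ a x y, G.mulVec ![a, x, y] = a • P + x • g + y • h := by
    intro a x y
    ext i
    simp [G, Matrix.mulVec, dotProduct, Fin.sum_univ_three]
    ring
  have hG : IsUnit G.det := by
    rw [isUnit_iff_ne_zero]
    intro h0
    obtain ⟨v, hv, hv0⟩ := Matrix.exists_mulVec_eq_zero_iff.mpr h0
    have hvv : v = ![v 0, v 1, v 2] := by ext i; fin_cases i <;> rfl
    rw [hvv, hGv] at hv0
    obtain ⟨h1, h2, h3⟩ := hind _ _ _ hv0
    apply hv
    rw [hvv, h1, h2, h3]
    ext i; fin_cases i <;> rfl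
  have hh : h 2 ≠ 0 := by
    intro h0
    obtain ⟨x, y, z, hxyz⟩ := exists_pre G hG ![0, 0, 1]
    rw [hGv] at hxyz
    have := congrFun hxyz 2
    simp [hP, hg, h0] at this
  have hμ : ∀ a x y : K, ((h 2) • ((LinearMap.proj 1 : (Fin 3 → K) →ₗ[K] K).comp G⁻¹.mulVecLin))
      (a • P + x • g + y • h) = h 2 * x := by
    intro a x y
    rw [← hGv]
    simp [Matrix.nonsing_inv_mul G hG]
  refine ⟨(h 2) • ((LinearMap.proj 1 : (Fin 3 → K) →ₗ[K] K).comp G⁻¹.mulVecLin), ?_, ?_⟩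
  · intro v h1 h2
    obtain ⟨a, x, y, rfl⟩ := exists_pre G hG v
    rw [hGv] at h1 h2 ⊢
    rw [hμ] at h1
    have hx : x = 0 := (mul_eq_zero.mp h1).resolve_left hh
    have hy : y = 0 := by simpa [hP, hg, hh] using h2
    exact ⟨a, by simp [hx, hy]⟩
  · intro v
    constructor
    · rintro ⟨a, k, s, t, rfl⟩
      have e : a • P + k • (algebraMap F K s • g + algebraMap F K t • h)
        = a • P + (k * algebraMap F K s) • g + (k * algebraMap F K t) • h := by
        module
      rw [e, hμ]
      by_cases ht : t = 0
      · left; simp [hP, hg, ht]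
      · right
        have ht' : algebraMap F K t ≠ 0 := by simpa using ht
        refine ⟨s / t, ?_⟩
        simp [hP, hg]
        field_simp
    · intro hv
      obtain ⟨a, x, y, rfl⟩ := exists_pre G hG v
      rw [hGv] at hv ⊢
      rw [hμ] at hv
      rcases hv with hv | ⟨u, hu⟩
      · have hy : y = 0 := by simpa [hP, hg, hh] using hv
        exact ⟨a, x, 1, 0, by simp [hy]⟩
      · have hx : x = algebraMap F K u * y := by
          simp [hP, hg] at hu
          apply mul_left_cancel₀ hh
          linear_combination hu
        refine ⟨a, y, u, 1, ?_⟩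
        rw [hx, map_one]
        module

lemma pencil_form (𝒦 : Set (PP K 3)) (P : PP K 3) (h : IsLinfBaerPencil F 𝒦 P) :
    ∃ μ : (Fin 3 → K) →ₗ[K] K, (∀ v, μ v = 0 → v 2 = 0 → ∃ c : K, v = c • P.rep) ∧
      ∀ p, p ∈ 𝒦 ↔ (p.rep 2 = 0 ∨ ∃ u : F, μ p.rep = algebraMap F K u * p.rep 2) := by
  obtain ⟨hP, ℓ, b, ⟨M, hM, hℓ, hb⟩, hPℓ, hX, h𝒦⟩ := h
  rw [linf_iff] at hP
  have hmem : ∀ p, p ∈ 𝒦 ↔ ∃ v ∈ sublineVecs F K, ∃ a k : K,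
      p.rep = a • P.rep + k • M.mulVec v := by
    intro p
    rw [h𝒦]
    simp only [Set.mem_iUnion, exists_prop]
    constructor
    · rintro ⟨X, hX, hp⟩
      rw [hb, mem_mimg] at hX
      obtain ⟨v, hv, c, hc, hX⟩ := hX
      obtain ⟨a, k, hak⟩ := Submodule.mem_span_pair.mp hp
      refine ⟨v, hv, a, k * c, ?_⟩
      rw [← hak, hX, mul_smul]
    · rintro ⟨v, hv, a, k, hp⟩
      have h0 : M.mulVec v ≠ 0 := by
        intro h0
        have := mulVec_eq_zero M hM v h0
        rcases hv with ⟨θ, rfl⟩ | hv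
        · simpa using congrFun this 1
        · rw [Set.mem_singleton_iff] at hv
          subst hv
          simpa using congrFun this 0
      refine ⟨Projectivization.mk K _ h0, by rw [hb]; exact ⟨v, hv, h0, rfl⟩, ?_⟩
      obtain ⟨c, hc, hcv⟩ := rep_mk_smul _ h0
      refine Submodule.mem_span_pair.mpr ⟨a, k * c⁻¹, ?_⟩
      rw [hcv, hp, smul_smul, mul_assoc, inv_mul_cancel₀ hc, mul_one]
  have hind : ∀ a x y : K, a • P.rep + x • M.mulVec ![1,0,0] + y • M.mulVec ![0,1,0] = 0 →
      a = 0 ∧ x = 0 ∧ y = 0 := by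
    intro a x y h
    have e : M.mulVec ![x, y, 0] = x • M.mulVec ![1,0,0] + y • M.mulVec ![0,1,0] := by
      rw [mulVec3]; simp
    rw [add_assoc, ← e] at h
    have ha : a = 0 := by
      by_contra ha
      apply hPℓ
      rw [hℓ, mem_mimg]
      have hPe : P.rep = (-a⁻¹) • M.mulVec ![x, y, 0] := by
        rw [eq_neg_of_add_eq_zero_right h, smul_neg, neg_smul, neg_neg, smul_smul,
          inv_mul_cancel₀ ha, one_smul]
      refine ⟨![x, y, 0], ⟨?_, rfl⟩, -a⁻¹, by simpa using ha, hPe⟩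
      intro h0
      apply P.rep_nonzero
      rw [hPe, h0]; simp
    rw [ha, zero_smul, zero_add] at h
    have h0 := mulVec_eq_zero M hM _ h
    exact ⟨ha, by simpa using congrFun h0 0, by simpa using congrFun h0 1⟩
  obtain ⟨X, ⟨hXb, hXl⟩, -⟩ := hX
  rw [hb, mem_mimg] at hXb
  rw [linf_iff] at hXl
  obtain ⟨v, hv, c, hc, hXv⟩ := hXb
  have hv2 : (M.mulVec v) 2 = 0 := by
    rw [hXv] at hXl
    simpa [hc] using hXl
  rcases hv with ⟨θ, rfl⟩ | hv
  · have e : ∀ x y, M.mulVec ![x, y, 0] = y • M.mulVec ![algebraMap F K θ, 1, 0]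
        + (x - algebraMap F K θ * y) • M.mulVec ![1,0,0] := by
      intro x y
      rw [mulVec3, mulVec3 M (algebraMap F K θ)]
      module
    obtain ⟨μ, h1, h2⟩ := normal_form (F := F) P.rep (M.mulVec ![algebraMap F K θ, 1, 0])
      (M.mulVec ![1,0,0]) (by
        intro a x y h
        have := hind a (algebraMap F K θ * x + y) x (by
          rw [← h, mulVec3 M (algebraMap F K θ)]; module)
        obtain ⟨h1, h2, h3⟩ := this
        exact ⟨h1, h3, by simpa [h3] using h2⟩) hP hv2
    refine ⟨μ, h1, fun p => ?_⟩
    rw [← h2, hmem]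
    constructor
    · rintro ⟨v, ⟨φ, rfl⟩ | hv, a, k, hp⟩
      · refine ⟨a, k, 1, φ - θ, ?_⟩
        rw [hp, e]
        simp
      · rw [Set.mem_singleton_iff] at hv
        subst hv
        exact ⟨a, k, 0, 1, by rw [hp]; simp⟩
    · rintro ⟨a, k, s, t, hp⟩
      by_cases hs : s = 0
      · refine ⟨_, Or.inr rfl, a, k * algebraMap F K t, ?_⟩
        rw [hp, hs, map_zero]; module
      · refine ⟨_, Or.inl ⟨θ + t / s, rfl⟩, a, k * algebraMap F K s, ?_⟩
        have hs' : algebraMap F K s ≠ 0 := by simpa using hs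
        rw [hp, e (algebraMap F K (θ + t / s)) 1]
        have : algebraMap F K (θ + t / s) - algebraMap F K θ * 1
          = algebraMap F K t / algebraMap F K s := by simp
        rw [this, mul_smul, smul_add (algebraMap F K s), one_smul, smul_smul (algebraMap F K s),
          mul_div_cancel₀ _ hs']
  · rw [Set.mem_singleton_iff] at hv
    subst hv
    obtain ⟨μ, h1, h2⟩ := normal_form (F := F) P.rep _ _ hind hP hv2
    refine ⟨μ, h1, fun p => ?_⟩
    rw [← h2, hmem]
    constructor
    · rintro ⟨v, ⟨φ, rfl⟩ | hv, a, k, hp⟩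
      · refine ⟨a, k, φ, 1, ?_⟩
        rw [hp, mulVec3]
        simp
      · rw [Set.mem_singleton_iff] at hv
        subst hv
        exact ⟨a, k, 1, 0, by rw [hp]; simp⟩
    · rintro ⟨a, k, s, t, hp⟩
      by_cases ht : t = 0
      · refine ⟨_, Or.inr rfl, a, k * algebraMap F K s, ?_⟩
        rw [hp, ht, map_zero]; module
      · refine ⟨_, Or.inl ⟨s / t, rfl⟩, a, k * algebraMap F K t, ?_⟩
        have ht' : algebraMap F K t ≠ 0 := by simpa using ht
        rw [hp, mulVec3 M (algebraMap F K (s / t)), map_div₀, mul_smul, zero_smul, add_zero,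
          smul_add (algebraMap F K t), one_smul, smul_smul (algebraMap F K t),
          mul_div_cancel₀ _ ht']

lemma tangent_ne [Fintype F] (h4 : 4 ≤ Fintype.card F)
    (B : Set (PP K 3)) (hB : IsBaerSubplane F B)
    (M : Matrix (Fin 3) (Fin 3) K) (hM : IsUnit M.det)
    (hCB : mimg M (conicVecs (Set.range (algebraMap F K))) ⊆ B) :
    ∃ (s : F) (p : PP K 3), p ∈ B ∧ ∃ c : K, c ≠ 0 ∧
      p.rep = c • M.mulVec ![0, 1, algebraMap F K s] := by
  obtain ⟨σ, hσ, hfix⟩ := exists_conj F K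
  obtain ⟨N, hN, rfl⟩ := hB
  have hpt : ∀ θ : F, ∃ w : Fin 3 → F, ∃ d : K, d ≠ 0 ∧
      M.mulVec ![1, algebraMap F K θ, algebraMap F K θ ^ 2] = d • N.mulVec (algVec F w) := by
    intro θ
    obtain ⟨p, hp, c, hc, hpc⟩ := mk_mem_conic M hM _ _ (Set.mem_range_self (f := algebraMap F K) θ)
    have := hCB hp
    rw [mem_mimg] at this
    obtain ⟨_, ⟨w, hw, rfl⟩, d, hd, hpd⟩ := this
    refine ⟨w, c⁻¹ * d, mul_ne_zero (inv_ne_zero hc) hd, ?_⟩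
    rw [mul_smul, ← hpd, hpc, smul_smul, inv_mul_cancel₀ hc, one_smul]
  obtain ⟨s, hs⟩ : ∃ s : F, s ∉ ({0, 1, 2} : Finset F) := by
    by_contra hcon
    push Not at hcon
    have : (Finset.univ : Finset F) ⊆ {0, 1, 2} := fun x _ => hcon x
    have h1 := Finset.card_le_card this
    have h2 : ({0, 1, 2} : Finset F).card ≤ 3 := Finset.card_le_three
    rw [Finset.card_univ] at h1
    omega
  simp only [Finset.mem_insert, Finset.mem_singleton, not_or] at hs
  obtain ⟨hs0, hs1, hs2⟩ := hs
  obtain ⟨w0, d0, hd0, e0⟩ := hpt 0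
  obtain ⟨w1, d1, hd1, e1⟩ := hpt 1
  obtain ⟨ws, ds, hds, es⟩ := hpt s
  obtain ⟨wr, dr, hdr, er⟩ := hpt (s - 1)
  simp only [map_zero, map_one, map_sub] at e0 e1 er
  set s' := algebraMap F K s with hs'
  have hs0' : s' ≠ 0 := by simpa [hs'] using hs0
  have hs1' : s' - 1 ≠ 0 := by
    rw [hs', ← map_one (algebraMap F K), ← map_sub]; simpa [sub_eq_zero] using hs1
  have hs2' : s' - 2 ≠ 0 := by
    rw [hs', ← map_ofNat (algebraMap F K) 2, ← map_sub]; simpa [sub_eq_zero] using hs2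
  have hss : σ s' = s' := hσ s
  -- relation
  have rel : (s' - 2) • (ds • N.mulVec (algVec F ws) - d0 • N.mulVec (algVec F w0))
      - s' • (dr • N.mulVec (algVec F wr) - d1 • N.mulVec (algVec F w1)) = 0 := by
    rw [← e0, ← e1, ← es, ← er, ← Matrix.mulVec_sub, ← Matrix.mulVec_sub, ← Matrix.mulVec_smul,
      ← Matrix.mulVec_smul, ← Matrix.mulVec_sub, ← Matrix.mulVec_zero M]
    congr 1
    ext i; fin_cases i <;> simp <;> ring
  have rel2 : (s' - 2) • (ds • (algVec F ws : Fin 3 → K) - d0 • algVec F w0)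
      - s' • (dr • (algVec F wr : Fin 3 → K) - d1 • algVec F w1) = 0 := by
    apply mulVec_eq_zero N hN
    rw [← rel]
    simp only [Matrix.mulVec_sub, Matrix.mulVec_smul]
  have rel3 : (s' - 2) • (σ ds • (algVec F ws : Fin 3 → K) - σ d0 • algVec F w0)
      - s' • (σ dr • (algVec F wr : Fin 3 → K) - σ d1 • algVec F w1) = 0 := by
    ext i
    have := congrArg σ (congrFun rel2 i)
    have h2 : σ 2 = 2 := map_ofNat σ 2
    simpa [algVec, hσ, hss, h2] using this
  have rel4 : ((s' - 2) * (σ d0 * ds - d0 * σ ds) * ds⁻¹) • (ds • N.mulVec (algVec F ws))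
      - (s' * (σ d0 * dr - d0 * σ dr) * dr⁻¹) • (dr • N.mulVec (algVec F wr))
      + (s' * (σ d0 * d1 - d0 * σ d1) * d1⁻¹) • (d1 • N.mulVec (algVec F w1)) = 0 := by
    rw [smul_smul, smul_smul, smul_smul, inv_mul_cancel_right₀ hds, inv_mul_cancel_right₀ hd1,
      inv_mul_cancel_right₀ hdr, ← Matrix.mulVec_smul, ← Matrix.mulVec_smul, ← Matrix.mulVec_smul,
      ← Matrix.mulVec_sub, ← Matrix.mulVec_add, ← Matrix.mulVec_zero N]
    congr 1
    ext i
    have r2 := congrFun rel2 i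
    have r3 := congrFun rel3 i
    simp only [Pi.sub_apply, Pi.smul_apply, Pi.add_apply, smul_eq_mul, Pi.zero_apply] at r2 r3 ⊢
    linear_combination σ d0 * r2 - d0 * r3
  rw [← e1, ← es, ← er, ← Matrix.mulVec_smul, ← Matrix.mulVec_smul, ← Matrix.mulVec_smul,
      ← Matrix.mulVec_sub, ← Matrix.mulVec_add] at rel4
  have rel5 := mulVec_eq_zero M hM _ rel4
  have hx : (s' - 2) * (σ d0 * ds - d0 * σ ds) * ds⁻¹ = 0 := by
    have k0 := congrFun rel5 0
    have k1 := congrFun rel5 1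
    have k2 := congrFun rel5 2
    simp at k0 k1 k2
    have : (s' - 1) * ((s' - 2) * (σ d0 * ds - d0 * σ ds) * ds⁻¹) = 0 := by
      linear_combination k2 - s' * k1 + (s' - 1) * k0
    exact (mul_eq_zero.mp this).resolve_left hs1'
  have hx2 : σ d0 * ds - d0 * σ ds = 0 := by
    rcases mul_eq_zero.mp hx with h | h
    · exact (mul_eq_zero.mp h).resolve_left hs2'
    · exact absurd h (inv_ne_zero hds)
  have hσd0 : σ d0 ≠ 0 := by simpa using hd0
  obtain ⟨g, hg⟩ := hfix (ds / d0) (by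
    rw [map_div₀]
    field_simp
    linear_combination -hx2)
  have hds' : ds = d0 * algebraMap F K g := by rw [hg]; field_simp
  have key : M.mulVec ![0, 1, s'] = (s'⁻¹ * d0) • N.mulVec (algVec F (g • ws - w0)) := by
    have h1 : M.mulVec ![0, 1, s'] = s'⁻¹ • (M.mulVec ![1, s', s'^2] - M.mulVec ![1, 0, 0^2]) := by
      rw [← Matrix.mulVec_sub, ← Matrix.mulVec_smul]
      congr 1
      ext i; fin_cases i <;> simp <;> field_simp
    rw [h1, es, e0, hds', mul_smul, mul_smul, ← smul_sub, ← Matrix.mulVec_smul,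
      ← Matrix.mulVec_sub]
    congr 3
    ext i
    simp [algVec, Algebra.smul_def]
  have h0 : M.mulVec ![0, 1, s'] ≠ 0 := by
    intro h
    have := congrFun (mulVec_eq_zero M hM _ h) 1
    simp at this
  refine ⟨s, Projectivization.mk K _ h0, ?_, rep_mk_smul _ h0⟩
  rw [mem_mimg]
  obtain ⟨c, hc, hcv⟩ := rep_mk_smul _ h0
  refine ⟨_, ⟨g • ws - w0, ?_, rfl⟩, c * (s'⁻¹ * d0),
    mul_ne_zero hc (mul_ne_zero (inv_ne_zero hs0') hd0), ?_⟩
  · intro hz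
    apply h0
    rw [key, hz]
    have : (algVec F (0 : Fin 3 → F) : Fin 3 → K) = 0 := by ext i; simp [algVec]
    rw [this]; simp
  · rw [hcv, key, smul_smul]

lemma pencil_unique [Fintype F] (h4 : 4 ≤ Fintype.card F)
    (M : Matrix (Fin 3) (Fin 3) K) (hM : IsUnit M.det) (a0 a1 δ : K)
    (hM2 : ∀ x y z, M.mulVec ![x, y, z] 2 = a0 * x + a1 * y) (ha : a1 ≠ 0)
    (hδ' : a0 = - (a1 * δ)) (hδ : ∀ u : F, algebraMap F K u ≠ δ)
    (𝒦 : Set (PP K 3)) (P : PP K 3) (h : IsLinfBaerPencil F 𝒦 P)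
    (hC : mimg M (conicVecs (Set.range (algebraMap F K))) ⊆ 𝒦) :
    (∃ c : K, c ≠ 0 ∧ P.rep = c • M.mulVec ![1, δ, δ ^ 2]) ∧
    ∀ (p : PP K 3) (x y z : K), p.rep = M.mulVec ![x, y, z] →
      (p ∈ 𝒦 ↔ (p.rep 2 = 0 ∨ ∃ u : F, a1 * (z - δ * y) = algebraMap F K u * p.rep 2)) := by
  obtain ⟨μ, h1, h2⟩ := pencil_form 𝒦 P h
  have hμ : ∀ x y z, μ (M.mulVec ![x, y, z]) = x * μ (M.mulVec ![1,0,0])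
      + y * μ (M.mulVec ![0,1,0]) + z * μ (M.mulVec ![0,0,1]) := by
    intro x y z
    rw [mulVec3]; simp
  obtain ⟨r, s, hm0, hm1, hm2⟩ := core (F := F) h4 δ (μ (M.mulVec ![1,0,0]) / a1)
    (μ (M.mulVec ![0,1,0]) / a1) (μ (M.mulVec ![0,0,1]) / a1) hδ (by
      intro θ
      obtain ⟨p, hp, d, hd, hpd⟩ := mk_mem_conic M hM _ _
        (Set.mem_range_self (f := algebraMap F K) θ)
      have hne : algebraMap F K θ - δ ≠ 0 := sub_ne_zero.mpr (hδ θ)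
      rcases (h2 p).mp (hC hp) with h | ⟨u, hu⟩
      · rw [hpd, Pi.smul_apply, hM2, smul_eq_mul, hδ'] at h
        have : d * (a1 * (algebraMap F K θ - δ)) = 0 := by linear_combination h
        exact absurd this (mul_ne_zero hd (mul_ne_zero ha hne))
      · refine ⟨u, ?_⟩
        rw [hpd, Pi.smul_apply, hM2, map_smul, hμ, smul_eq_mul, smul_eq_mul, hδ'] at hu
        field_simp
        apply mul_left_cancel₀ hd
        linear_combination hu)
  have hμ' : ∀ x y z, μ (M.mulVec ![x, y, z]) = algebraMap F K r * (M.mulVec ![x, y, z] 2)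
      + algebraMap F K s * (a1 * (z - δ * y)) := by
    intro x y z
    rw [div_eq_iff ha] at hm0 hm1 hm2
    rw [hμ, hM2, hm0, hm1, hm2, hδ']
    ring
  have hP0 : M.mulVec ![1, δ, δ ^ 2] 2 = 0 := by rw [hM2, hδ']; ring
  obtain ⟨c, hc⟩ := h1 (M.mulVec ![1, δ, δ ^ 2]) (by rw [hμ', hP0]; ring) hP0
  have hc0 : c ≠ 0 := by
    rintro rfl
    rw [zero_smul] at hc
    simpa using congrFun (mulVec_eq_zero M hM _ hc) 0
  have hPr : P.rep = c⁻¹ • M.mulVec ![1, δ, δ ^ 2] := by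
    rw [hc, smul_smul, inv_mul_cancel₀ hc0, one_smul]
  have hs : s ≠ 0 := by
    rintro rfl
    have hT0 : M.mulVec ![0, 0, 1] 2 = 0 := by rw [hM2]; ring
    obtain ⟨d, hd⟩ := h1 (M.mulVec ![0, 0, 1]) (by rw [hμ', hT0]; simp) hT0
    rw [hPr, smul_smul, ← Matrix.mulVec_smul] at hd
    have hd := mulVec_inj M hM hd
    have k0 := congrFun hd 0
    have k2 := congrFun hd 2
    simp at k0 k2
    rcases k0 with k0 | k0
    · simp [k0] at k2
    · exact hc0 k0
  have hs' : algebraMap F K s ≠ 0 := by simpa using hs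
  refine ⟨⟨c⁻¹, inv_ne_zero hc0, hPr⟩, ?_⟩
  intro p x y z hp
  rw [h2, hp]
  refine or_congr Iff.rfl ⟨?_, ?_⟩
  · rintro ⟨u, hu⟩
    rw [hμ'] at hu
    refine ⟨(u - r) / s, ?_⟩
    rw [map_div₀, map_sub]
    field_simp
    linear_combination hu
  · rintro ⟨u, hu⟩
    refine ⟨r + s * u, ?_⟩
    rw [hμ', hu, map_add, map_mul]
    ring

lemma pencil_exists
    (M : Matrix (Fin 3) (Fin 3) K) (hM : IsUnit M.det) (a0 a1 δ : K)
    (hM2 : ∀ x y z, M.mulVec ![x, y, z] 2 = a0 * x + a1 * y) (ha : a1 ≠ 0)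
    (hδ' : a0 = - (a1 * δ)) (hδ : ∀ u : F, algebraMap F K u ≠ δ) :
    ∃ (𝒦 : Set (PP K 3)) (P : PP K 3), IsLinfBaerPencil F 𝒦 P ∧
      mimg M (conicVecs (Set.range (algebraMap F K))) ⊆ 𝒦 := by
  let S : Matrix (Fin 3) (Fin 3) K := !![0,0,1; 0,1,0; 1,δ,0]
  have hS : S.det = -1 := by simp [S, Matrix.det_fin_three]
  have hSv : ∀ x y z, (M * S).mulVec ![x,y,z] = M.mulVec ![z, y, x + δ * y] := by
    intro x y z
    rw [← Matrix.mulVec_mulVec]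
    congr 1
    ext i
    fin_cases i <;> simp [S, Matrix.mulVec, dotProduct, Fin.sum_univ_three]
  have hMS : IsUnit (M * S).det := by rw [Matrix.det_mul, hS]; exact hM.mul (by simp)
  have hne : ∀ x y z i, ![x, y, z] i ≠ 0 → M.mulVec ![x, y, z] ≠ 0 := by
    intro x y z i hi h
    exact hi (congrFun (mulVec_eq_zero M hM _ h) i)
  have hP0 : M.mulVec ![1, δ, δ ^ 2] ≠ 0 := hne _ _ _ 0 (by simp)
  have hT0 : M.mulVec ![0, 0, 1] ≠ 0 := hne _ _ _ 2 (by simp)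
  obtain ⟨d, hd, hPd⟩ := rep_mk_smul _ hP0
  obtain ⟨t, ht, hTt⟩ := rep_mk_smul _ hT0
  have hTb : Projectivization.mk K _ hT0 ∈ mimg (M * S) (sublineVecs F K) := by
    rw [mem_mimg]
    exact ⟨_, Or.inr rfl, t, ht, by rw [hTt, hSv]; simp⟩
  refine ⟨⋃ X ∈ mimg (M * S) (sublineVecs F K), lineTh (Projectivization.mk K _ hP0) X,
    Projectivization.mk K _ hP0, ⟨?_, _, _, ⟨M * S, hMS, rfl, rfl⟩, ?_, ?_, rfl⟩, ?_⟩
  · rw [linf_iff, hPd, Pi.smul_apply, hM2, hδ']; simp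
  · rw [mem_mimg]
    rintro ⟨v, ⟨hv, hv2⟩, c, hc, hP⟩
    have hvv : v = ![v 0, v 1, v 2] := by ext i; fin_cases i <;> rfl
    rw [hvv, hSv, hv2, hPd, ← Matrix.mulVec_smul, ← Matrix.mulVec_smul] at hP
    have := congrFun (mulVec_inj M hM hP) 0
    simp at this
    exact hd this
  · refine ⟨Projectivization.mk K _ hT0, ⟨hTb, ?_⟩, ?_⟩
    · rw [linf_iff, hTt, Pi.smul_apply, hM2]; simp
    · rintro X ⟨hX, hXl⟩
      rw [linf_iff] at hXl
      rw [mem_mimg] at hX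
      obtain ⟨v, ⟨θ, rfl⟩ | hv, c, hc, hX⟩ := hX
      · rw [hX, Pi.smul_apply, hSv, hM2] at hXl
        simp [hc, ha] at hXl
      · rw [Set.mem_singleton_iff] at hv
        subst hv
        rw [hSv] at hX
        exact eq_mk_of_rep _ _ _ c (by rw [hX]; simp)
  · intro p hp
    rw [mem_mimg] at hp
    simp only [Set.mem_iUnion, exists_prop]
    obtain ⟨v, ⟨_, ⟨θ, rfl⟩, rfl⟩ | hv, c, hc, hp⟩ := hp
    · have hf : M.mulVec ![0, 1, algebraMap F K θ + δ] ≠ 0 := hne _ _ _ 1 (by simp)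
      obtain ⟨e, he, hfe⟩ := rep_mk_smul _ hf
      refine ⟨Projectivization.mk K _ hf, ?_, ?_⟩
      · rw [mem_mimg]
        exact ⟨_, Or.inl ⟨θ, rfl⟩, e, he, by rw [hfe, hSv]; simp⟩
      · refine Submodule.mem_span_pair.mpr ⟨c * d⁻¹, c * (algebraMap F K θ - δ) * e⁻¹, ?_⟩
        rw [hPd, hfe, hp, smul_smul, smul_smul, inv_mul_cancel_right₀ hd,
          inv_mul_cancel_right₀ he, ← Matrix.mulVec_smul, ← Matrix.mulVec_smul,
          ← Matrix.mulVec_smul, ← Matrix.mulVec_add]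
        congr 1
        ext i; fin_cases i <;> simp <;> ring
    · rw [Set.mem_singleton_iff] at hv
      subst hv
      refine ⟨_, hTb, Submodule.mem_span_pair.mpr ⟨0, c * t⁻¹, ?_⟩⟩
      rw [hTt, hp, smul_smul, inv_mul_cancel_right₀ ht]
      simp

lemma conic_plus [Fintype F] (h4 : 4 ≤ Fintype.card F)
    (M : Matrix (Fin 3) (Fin 3) K) (hM : IsUnit M.det)
    (D : Set (PP K 3)) (hD : IsFq2Conic D)
    (hCD : mimg M (conicVecs (Set.range (algebraMap F K))) ⊆ D) (δ : K) (P : PP K 3) (c : K)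
    (hP : P.rep = c • M.mulVec ![1, δ, δ ^ 2]) : P ∈ D := by
  obtain ⟨N, hN, rfl⟩ := hD
  have hmem : ∀ (p : PP K 3) (x y z : K), p.rep = N.mulVec ![x, y, z] →
      (p ∈ mimg N (conicVecs Set.univ) ↔ y ^ 2 = x * z) := by
    intro p x y z hp
    rw [mem_mimg]
    constructor
    · rintro ⟨v, ⟨θ, -, rfl⟩ | hv, d, hd, hpd⟩
      · rw [hp, ← Matrix.mulVec_smul] at hpd
        have h := mulVec_inj N hN hpd
        have k0 := congrFun h 0
        have k1 := congrFun h 1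
        have k2 := congrFun h 2
        simp at k0 k1 k2
        rw [k0, k1, k2]; ring
      · rw [Set.mem_singleton_iff] at hv
        subst hv
        rw [hp, ← Matrix.mulVec_smul] at hpd
        have h := mulVec_inj N hN hpd
        have k0 := congrFun h 0
        have k1 := congrFun h 1
        simp at k0 k1
        rw [k0, k1]; ring
    · intro hq
      by_cases hx : x = 0
      · have hy : y = 0 := by simpa [hx] using hq
        have hz : z ≠ 0 := by
          intro hz
          apply p.rep_nonzero
          rw [hp, hx, hy, hz, mulVec3]; simp
        refine ⟨_, Or.inr rfl, z, hz, ?_⟩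
        rw [hp, hx, hy, mulVec3]; simp
      · refine ⟨_, Or.inl ⟨y / x, trivial, rfl⟩, x, hx, ?_⟩
        rw [hp, ← Matrix.mulVec_smul]
        congr 1
        ext i; fin_cases i <;> simp <;> field_simp
        linear_combination -hq
  obtain ⟨x0, y0, z0, h0⟩ := exists_pre N hN (M.mulVec ![1,0,0])
  obtain ⟨x1, y1, z1, h1⟩ := exists_pre N hN (M.mulVec ![0,1,0])
  obtain ⟨x2, y2, z2, h2⟩ := exists_pre N hN (M.mulVec ![0,0,1])
  have hMN : ∀ d x y z, d • M.mulVec ![x, y, z] = N.mulVec ![d * (x * x0 + y * x1 + z * x2),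
      d * (x * y0 + y * y1 + z * y2), d * (x * z0 + y * z1 + z * z2)] := by
    intro d x y z
    rw [mulVec3, h0, h1, h2, ← Matrix.mulVec_smul, ← Matrix.mulVec_smul, ← Matrix.mulVec_smul,
      ← Matrix.mulVec_add, ← Matrix.mulVec_add, ← Matrix.mulVec_smul]
    congr 1
    ext i; fin_cases i <;> simp
  have hT : y2 ^ 2 = x2 * z2 := by
    have hT0 : M.mulVec ![0, 0, 1] ≠ 0 := by
      intro h
      simpa using congrFun (mulVec_eq_zero M hM _ h) 2
    obtain ⟨t, ht, hTt⟩ := rep_mk_smul _ hT0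
    have := (hmem _ _ _ _ (by rw [hTt, hMN])).mp (hCD ⟨_, Or.inr rfl, hT0, rfl⟩)
    apply mul_left_cancel₀ (pow_ne_zero 2 ht)
    linear_combination this
  have hz := cubic_zero (F := F) h4 (y0 ^ 2 - x0 * z0) (2 * y0 * y1 - x0 * z1 - x1 * z0)
    (y1 ^ 2 + 2 * y0 * y2 - x0 * z2 - x2 * z0 - x1 * z1) (2 * y1 * y2 - x1 * z2 - x2 * z1) (by
      intro θ
      obtain ⟨p, hp, d, hd, hpd⟩ := mk_mem_conic M hM _ _
        (Set.mem_range_self (f := algebraMap F K) θ)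
      have := (hmem _ _ _ _ (by rw [hpd, hMN])).mp (hCD hp)
      apply mul_left_cancel₀ (pow_ne_zero 2 hd)
      linear_combination this - d ^ 2 * algebraMap F K θ ^ 4 * hT) δ
  rw [hmem P _ _ _ (by rw [hP, hMN])]
  linear_combination c ^ 2 * hz + c ^ 2 * δ ^ 4 * hT

end Helpers

/-- An `F_q`-conic `C` through `T̄` in a Baer subplane tangent to `ℓ∞` at `T̄` lies in a
unique `ℓ∞`-Baer pencil, whose vertex lies on `C⁺ ∩ ℓ∞`. -/
theorem statement_3
    {F K : Type} [Field F] [Field K] [Fintype F] [Fintype K] [Algebra F K]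
    (q : ℕ) (hq : Fintype.card F = q) (hK : Fintype.card K = q ^ 2)
    (τ : K) (t0 t1 : F)
    (hτ : τ ^ 2 = algebraMap F K t1 * τ + algebraMap F K t0)
    (hτF : τ ∉ Set.range (algebraMap F K))
    (c0 c1 : K → F)
    (hc : ∀ x : K, x = algebraMap F K (c0 x) + algebraMap F K (c1 x) * τ)
    (hq4 : 4 ≤ q)
    (B : Set (PP K 3)) (hB : IsBaerSubplane F B)
    (T : PP K 3) (hT : B ∩ linf K = {T})
    (C : Set (PP K 3)) (hC : IsFqConic F C) (hCB : C ⊆ B) (hTC : T ∈ C) :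
    (∃! 𝒦 : Set (PP K 3), (∃ P : PP K 3, IsLinfBaerPencil F 𝒦 P) ∧ C ⊆ 𝒦) ∧
    (∀ (𝒦 : Set (PP K 3)) (P : PP K 3), IsLinfBaerPencil F 𝒦 P → C ⊆ 𝒦 →
      ∀ D : Set (PP K 3), IsFq2Conic D → C ⊆ D → P ∈ D ∩ linf K) := by
  classical
  subst hq
  obtain ⟨M, hM, rfl, cT, hcT, hTr⟩ := conic_through C hC T hTC
  have huniq : ∀ p ∈ B, p.rep 2 = 0 → p = T := by
    intro p hp hp2
    have : p ∈ B ∩ linf K := ⟨hp, hp2⟩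
    rw [hT] at this
    exact this
  have hTl : T.rep 2 = 0 := by
    have : T ∈ B ∩ linf K := by rw [hT]; rfl
    exact this.2
  obtain ⟨a0, ha0⟩ : ∃ a, a = M 2 0 := ⟨_, rfl⟩
  obtain ⟨a1, ha1⟩ : ∃ a, a = M 2 1 := ⟨_, rfl⟩
  have h22 : M 2 2 = 0 := by
    rw [hTr] at hTl
    simpa [hcT, Matrix.mulVec, dotProduct, Fin.sum_univ_three] using hTl
  have hM2 : ∀ x y z, M.mulVec ![x, y, z] 2 = a0 * x + a1 * y := by
    intro x y z
    simp [Matrix.mulVec, dotProduct, Fin.sum_univ_three, h22, ha0, ha1]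
  have ha : a1 ≠ 0 := by
    intro h0
    obtain ⟨s, p, hpB, d, hd, hp⟩ := tangent_ne (F := F) hq4 B hB M hM hCB
    have := huniq p hpB (by rw [hp, Pi.smul_apply, hM2, h0]; simp)
    rw [this, hTr, ← Matrix.mulVec_smul, ← Matrix.mulVec_smul] at hp
    have := congrFun (mulVec_inj M hM hp) 1
    simp at this
    exact hd this.symm
  have hδ' : a0 = - (a1 * (-a0 / a1)) := by field_simp
  generalize -a0 / a1 = δ at hδ'
  have hδ : ∀ u : F, algebraMap F K u ≠ δ := by
    rintro u rfl
    obtain ⟨p, hp, d, hd, hpd⟩ := mk_mem_conic M hM _ _ (Set.mem_range_self (f := algebraMap F K) u)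
    have := huniq p (hCB hp) (by rw [hpd, Pi.smul_apply, hM2, hδ']; simp)
    rw [this, hTr, ← Matrix.mulVec_smul, ← Matrix.mulVec_smul] at hpd
    have := congrFun (mulVec_inj M hM hpd) 0
    simp at this
    exact hd this.symm
  have U := fun 𝒦 P h hC𝒦 => pencil_unique (F := F) hq4 M hM a0 a1 δ hM2 ha hδ' hδ 𝒦 P h hC𝒦
  obtain ⟨𝒦₀, P₀, h₀, hC₀⟩ := pencil_exists (F := F) M hM a0 a1 δ hM2 ha hδ' hδ
  refine ⟨⟨𝒦₀, ⟨⟨P₀, h₀⟩, hC₀⟩, ?_⟩, ?_⟩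
  · rintro 𝒦 ⟨⟨P, hP⟩, hC𝒦⟩
    ext p
    obtain ⟨x, y, z, hp⟩ := exists_pre M hM p.rep
    rw [(U 𝒦 P hP hC𝒦).2 p x y z hp, (U 𝒦₀ P₀ h₀ hC₀).2 p x y z hp]
  · intro 𝒦 P hP hC𝒦 D hD hCD
    refine ⟨?_, hP.1⟩
    obtain ⟨c, hc, hPc⟩ := (U 𝒦 P hP hC𝒦).1
    exact conic_plus (F := F) hq4 M hM D hD hCD δ P c hPc

end BaerConics
end
end

section
/- Let f be a quadratic form over K = GF(q²) whose zero set in PG(2,q²) is an F_{q²}-conic 𝒪. (i) If 𝒪 is tangent to ℓ∞ at the point P̄, then [𝒪] ∩ Σ∞ = [P] and in PG(4,q²), [𝒪]⋆ ∩ {z = 0} = [P]⋆. (ii) If 𝒪 ∩ ℓ∞ = ∅, then [𝒪] ∩ Σ∞ = ∅, in PG(4,q²) [𝒪]⋆ ∩ {z = 0} = ∅, and in PG(4,q⁴) the set [𝒪]✶ ∩ {z = 0} equals ℓ_P ∪ ℓ_P^q ∪ ℓ_P^{q²} ∪ ℓ_P^{q³}, where P = αA₀ + A₁ for a point (α,1,0),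 α ∈ GF(q⁴), lying on the zero set of f over GF(q⁴), and ℓ_P is the line of PG(4,q⁴) through P and P^q (conjugation x ↦ x^q acting coordinatewise). -/
open scoped Classical
open Matrix

noncomputable section

namespace BaerConics

variable {K : Type} [Field K] {m n : ℕ}

/-- The Bruck-Bose substitution `(x₀,x₁,y₀,y₁,z) ↦ (x₀+x₁τ, y₀+y₁τ, z)`. -/
def bbSubst (F : Type) {K : Type} [Field F] [Field K] [Algebra F K] (τ : K)
    (v : Fin 5 → F) : Fin 3 → K :=
  ![algebraMap F K (v 0) + algebraMap F K (v 1) * τ,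
    algebraMap F K (v 2) + algebraMap F K (v 3) * τ,
    algebraMap F K (v 4)]

/-- The coordinatewise `q`-power map on vectors over `GF(q⁴)`. -/
def conjVecL {L : Type} [Field L] (qq : ℕ) (v : Fin 5 → L) : Fin 5 → L :=
  fun i => v i ^ qq

/-- The vector `αA₀ + A₁` (over `GF(q⁴)`) representing the transversal point `P`. -/
def pVec {K L : Type} [Field K] [Field L] [Algebra K L] (τ : K) (qq : ℕ) (α : L) :
    Fin 5 → L :=
  α • mapVec (algebraMap K L) (A0v τ qq) + mapVec (algebraMap K L) (A1v τ qq)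

/-- The line `ℓ_P^{q^k}` of `PG(4,q⁴)` joining `P^{q^k}` and `P^{q^{k+1}}`. -/
def lpLine {K L : Type} [Field K] [Field L] [Algebra K L] (τ : K) (qq : ℕ) (α : L)
    (k : ℕ) : Set (PP L 5) :=
  ptsOf (Submodule.span L
    {(conjVecL qq)^[k] (pVec τ qq α), (conjVecL qq)^[k + 1] (pVec τ qq α)})

lemma aux_fixed {A B : Type} [Field A] [Field B] [Fintype A] [Algebra A B] (x : B)
    (hx : x ^ Fintype.card A = x) : x ∈ Set.range (algebraMap A B) := by
  by_contra hne
  have h1 : 1 < Fintype.card A := Fintype.one_lt_card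
  have hp := FiniteField.X_pow_card_sub_X_ne_zero B h1
  have hd := FiniteField.X_pow_card_sub_X_natDegree_eq B h1
  have hsub : insert x (Finset.univ.image (algebraMap A B)) ⊆
      (Polynomial.X ^ Fintype.card A - Polynomial.X : Polynomial B).roots.toFinset := by
    intro y hy
    rw [Multiset.mem_toFinset, Polynomial.mem_roots hp]
    rw [Finset.mem_insert, Finset.mem_image] at hy
    rcases hy with rfl | ⟨a, -, rfl⟩
    · simp [hx]
    · simp [← map_pow, FiniteField.pow_card]
  have hc := Finset.card_le_card hsub
  rw [Finset.card_insert_of_notMem, Finset.card_image_of_injective _ (algebraMap A B).injective,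
    Finset.card_univ] at hc
  · have := Multiset.toFinset_card_le
      (Polynomial.X ^ Fintype.card A - Polynomial.X : Polynomial B).roots
    have := Polynomial.card_roots' (Polynomial.X ^ Fintype.card A - Polynomial.X : Polynomial B)
    omega
  · intro h
    rw [Finset.mem_image] at h
    obtain ⟨a, -, ha⟩ := h
    exact hne ⟨a, ha⟩

/-- Binary form at infinity. -/
def bin {A : Type} [Field A] (a b c x y : A) : A := a * x ^ 2 + b * (x * y) + c * y ^ 2

lemma qeval5 {A : Type} [Field A] (N : Matrix (Fin 5) (Fin 5) A) (v : Fin 5 → A) (h : v 4 = 0) :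
    qeval N v = N 0 0 * v 0 ^ 2 + N 1 1 * v 1 ^ 2 + N 2 2 * v 2 ^ 2 + N 3 3 * v 3 ^ 2
      + (N 0 1 + N 1 0) * (v 0 * v 1) + (N 0 2 + N 2 0) * (v 0 * v 2)
      + (N 0 3 + N 3 0) * (v 0 * v 3) + (N 1 2 + N 2 1) * (v 1 * v 2)
      + (N 1 3 + N 3 1) * (v 1 * v 3) + (N 2 3 + N 3 2) * (v 2 * v 3) := by
  simp only [qeval, dotProduct, mulVec, Fin.sum_univ_five, h]
  ring

lemma qeval3 {A : Type} [Field A] (N : Matrix (Fin 3) (Fin 3) A) (v : Fin 3 → A) (h : v 2 = 0) :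
    qeval N v = bin (N 0 0) (N 0 1 + N 1 0) (N 1 1) (v 0) (v 1) := by
  simp only [qeval, dotProduct, mulVec, Fin.sum_univ_three, h, bin]
  ring

lemma dec_ext {F K E : Type} [Field F] [Field K] [Field E] [Algebra F K] (τ : K)
    (M : Matrix (Fin 3) (Fin 3) K) (Minf M0 : Matrix (Fin 5) (Fin 5) F)
    (hdec : ∀ v : Fin 5 → F, qeval M (bbSubst F τ v) =
      algebraMap F K (qeval Minf v) + algebraMap F K (qeval M0 v) * τ)
    (φ : K →+* E) (ψ : F →+* E) (hφ : ∀ x, φ (algebraMap F K x) = ψ x)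
    (v : Fin 5 → E) (h4 : v 4 = 0) :
    qeval (Minf.map ψ) v + qeval (M0.map ψ) v * φ τ =
      bin (φ (M 0 0)) (φ (M 0 1 + M 1 0)) (φ (M 1 1)) (v 0 + v 1 * φ τ) (v 2 + v 3 * φ τ) := by
  have key : ∀ w : Fin 5 → F, w 4 = 0 → 
      bin (φ (M 0 0)) (φ (M 0 1 + M 1 0)) (φ (M 1 1)) (ψ (w 0) + ψ (w 1) * φ τ)
        (ψ (w 2) + ψ (w 3) * φ τ) = ψ (qeval Minf w) + ψ (qeval M0 w) * φ τ := by
    intro w hw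
    have := congrArg φ (hdec w)
    rw [qeval3 _ _ (by simp [bbSubst, hw])] at this
    simpa [bin, bbSubst, hφ] using this
  have k0 := key ![1,0,0,0,0] (by simp)
  have k1 := key ![0,1,0,0,0] (by simp)
  have k2 := key ![0,0,1,0,0] (by simp)
  have k3 := key ![0,0,0,1,0] (by simp)
  have k01 := key ![1,1,0,0,0] (by simp)
  have k02 := key ![1,0,1,0,0] (by simp)
  have k03 := key ![1,0,0,1,0] (by simp)
  have k12 := key ![0,1,1,0,0] (by simp)
  have k13 := key ![0,1,0,1,0] (by simp)
  have k23 := key ![0,0,1,1,0] (by simp)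
  rw [qeval5 _ _ (by simp), qeval5 _ _ (by simp)] at k0 k1 k2 k3 k01 k02 k03 k12 k13 k23
  rw [qeval5 _ _ h4, qeval5 _ _ h4]
  simp [bin] at k0 k1 k2 k3 k01 k02 k03 k12 k13 k23
  simp only [bin, Matrix.map_apply, map_add]
  linear_combination -(v 0 ^ 2 - v 0 * v 1 - v 0 * v 2 - v 0 * v 3) * k0
    - (v 1 ^ 2 - v 0 * v 1 - v 1 * v 2 - v 1 * v 3) * k1
    - (v 2 ^ 2 - v 0 * v 2 - v 1 * v 2 - v 2 * v 3) * k2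
    - (v 3 ^ 2 - v 0 * v 3 - v 1 * v 3 - v 2 * v 3) * k3
    - (v 0 * v 1) * k01 - (v 0 * v 2) * k02 - (v 0 * v 3) * k03
    - (v 1 * v 2) * k12 - (v 1 * v 3) * k13 - (v 2 * v 3) * k23

lemma indep2 {A : Type} [Field A] {s s' x y : A} (hs : s ≠ s') (h1 : x + y * s = 0)
    (h2 : x + y * s' = 0) : x = 0 ∧ y = 0 := by
  have hy : y * (s - s') = 0 := by linear_combination h1 - h2
  have hy0 : y = 0 := (mul_eq_zero.mp hy).resolve_right (sub_ne_zero.mpr hs)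
  subst hy0
  exact ⟨by simpa using h1, rfl⟩

lemma indepF {F K : Type} [Field F] [Field K] [Algebra F K] {τ : K}
    (hτF : τ ∉ Set.range (algebraMap F K)) {x y : F}
    (h : algebraMap F K x + algebraMap F K y * τ = 0) : x = 0 ∧ y = 0 := by
  have hy : y = 0 := by
    by_contra hy
    apply hτF
    refine ⟨-x / y, ?_⟩
    have : algebraMap F K y ≠ 0 := by simpa using hy
    rw [map_div₀, map_neg]
    field_simp
    linear_combination -h
  subst hy
  exact ⟨by simpa using h, rfl⟩

/-- The equivalence of two descriptions of `[𝒪]` at infinity. -/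
lemma inf_iff {F K E : Type} [Field F] [Field K] [Field E] [Algebra F K] (τ : K)
    (M : Matrix (Fin 3) (Fin 3) K) (Minf M0 : Matrix (Fin 5) (Fin 5) F)
    (hdec : ∀ v : Fin 5 → F, qeval M (bbSubst F τ v) =
      algebraMap F K (qeval Minf v) + algebraMap F K (qeval M0 v) * τ)
    (φ φ' : K →+* E) (ψ : F →+* E) (hφ : ∀ x, φ (algebraMap F K x) = ψ x)
    (hφ' : ∀ x, φ' (algebraMap F K x) = ψ x) (hs : φ τ ≠ φ' τ)
    (v : Fin 5 → E) (h4 : v 4 = 0) :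
    (qeval (Minf.map ψ) v = 0 ∧ qeval (M0.map ψ) v = 0) ↔
      (bin (φ (M 0 0)) (φ (M 0 1 + M 1 0)) (φ (M 1 1)) (v 0 + v 1 * φ τ) (v 2 + v 3 * φ τ) = 0 ∧
      bin (φ' (M 0 0)) (φ' (M 0 1 + M 1 0)) (φ' (M 1 1)) (v 0 + v 1 * φ' τ) (v 2 + v 3 * φ' τ)
        = 0) := by
  rw [← dec_ext τ M Minf M0 hdec φ ψ hφ v h4, ← dec_ext τ M Minf M0 hdec φ' ψ hφ' v h4]
  constructor
  · rintro ⟨h1, h2⟩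
    simp [h1, h2]
  · rintro ⟨h1, h2⟩
    exact indep2 hs h1 h2

lemma qeval_smul {A : Type} [Field A] {n : ℕ} (N : Matrix (Fin n) (Fin n) A) (r : A)
    (v : Fin n → A) : qeval N (r • v) = r * r * qeval N v := by
  simp [qeval, Matrix.mulVec_smul, mul_assoc]

lemma mem_iff {A : Type} [Field A] (M : Matrix (Fin 3) (Fin 3) A) (x y : A)
    (h : (![x, y, 0] : Fin 3 → A) ≠ 0) :
    (Projectivization.mk A _ h ∈ {p : PP A 3 | qeval M p.rep = 0} ∩ linf A) ↔
      bin (M 0 0) (M 0 1 + M 1 0) (M 1 1) x y = 0 := by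
  obtain ⟨r, hr⟩ := Projectivization.exists_smul_eq_mk_rep A _ h
  have hr0 : (r : A) ≠ 0 := r.ne_zero
  rw [Units.smul_def] at hr
  simp only [Set.mem_inter_iff, Set.mem_ofPred_eq, linf, ← hr]
  rw [qeval_smul, qeval3 _ _ (by simp)]
  simp [hr0]

lemma tang_some {A : Type} [Field A] (M : Matrix (Fin 3) (Fin 3) A) (δ : A)
    (h : {p : PP A 3 | qeval M p.rep = 0} ∩ linf A = {ptInf (some δ)}) :
    M 0 0 ≠ 0 ∧ ∀ x y, bin (M 0 0) (M 0 1 + M 1 0) (M 1 1) x y = M 0 0 * (x - δ * y) ^ 2 := by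
  have hroot : ∀ x y : A, (x ≠ 0 ∨ y ≠ 0) → bin (M 0 0) (M 0 1 + M 1 0) (M 1 1) x y = 0 →
      x = δ * y ∧ y ≠ 0 := by
    intro x y hxy hb
    have hne : (![x, y, 0] : Fin 3 → A) ≠ 0 := by
      intro h0
      have e0 := congrFun h0 0
      have e1 := congrFun h0 1
      simp at e0 e1
      tauto
    have := (mem_iff M x y hne).mpr hb
    rw [h, Set.mem_singleton_iff, ptInf, Projectivization.mk_eq_mk_iff'] at this
    obtain ⟨r, hr⟩ := this
    have e0 := congrFun hr 0
    have e1 := congrFun hr 1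
    simp [ptInfVec] at e0 e1
    subst e1
    have : x = δ * r := by rw [← e0]; ring
    refine ⟨this, ?_⟩
    rintro rfl
    simp at this
    tauto
  have h1 : bin (M 0 0) (M 0 1 + M 1 0) (M 1 1) δ 1 = 0 := by
    rw [← mem_iff M δ 1 (ptInfVec_ne (some δ)), h]
    rfl
  set a := M 0 0
  set b := M 0 1 + M 1 0
  set c := M 1 1
  have ha : a ≠ 0 := by
    intro ha
    have := hroot 1 0 (by simp) (by simp [bin, ha])
    simp at this
  have h2 := (hroot (a * δ + b) (-a) (by simp [ha]) (by
    unfold bin at h1 ⊢; linear_combination a ^ 2 * h1)).1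
  refine ⟨ha, fun x y => ?_⟩
  unfold bin at h1 ⊢
  linear_combination (x * y) * h2 + y ^ 2 * h1 - δ * y ^ 2 * h2

lemma tang_none {A : Type} [Field A] (M : Matrix (Fin 3) (Fin 3) A)
    (h : {p : PP A 3 | qeval M p.rep = 0} ∩ linf A = {ptInf none}) :
    M 1 1 ≠ 0 ∧ ∀ x y, bin (M 0 0) (M 0 1 + M 1 0) (M 1 1) x y = M 1 1 * y ^ 2 := by
  have hroot : ∀ x y : A, (x ≠ 0 ∨ y ≠ 0) → bin (M 0 0) (M 0 1 + M 1 0) (M 1 1) x y = 0 →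
      y = 0 := by
    intro x y hxy hb
    have hne : (![x, y, 0] : Fin 3 → A) ≠ 0 := by
      intro h0
      have e0 := congrFun h0 0
      have e1 := congrFun h0 1
      simp at e0 e1
      tauto
    have := (mem_iff M x y hne).mpr hb
    rw [h, Set.mem_singleton_iff, ptInf, Projectivization.mk_eq_mk_iff'] at this
    obtain ⟨r, hr⟩ := this
    have e1 := congrFun hr 1
    simp [ptInfVec] at e1
    exact e1.symm
  have h1 : bin (M 0 0) (M 0 1 + M 1 0) (M 1 1) 1 0 = 0 := by
    rw [← mem_iff M 1 0 (ptInfVec_ne none), h]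
    rfl
  set a := M 0 0
  set b := M 0 1 + M 1 0
  set c := M 1 1
  have ha : a = 0 := by simpa [bin] using h1
  have hc : c ≠ 0 := by
    intro hc
    have := hroot 0 1 (by simp) (by simp [bin, hc])
    simp at this
  have hb : b = 0 := by
    have := hroot c (-b) (by simp [hc]) (by simp [bin, ha]; ring)
    simpa using this
  refine ⟨hc, fun x y => ?_⟩
  simp [bin, ha, hb]

lemma ext_root {A : Type} [Field A] (M : Matrix (Fin 3) (Fin 3) A)
    (h : {p : PP A 3 | qeval M p.rep = 0} ∩ linf A = ∅) (x y : A)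
    (hb : bin (M 0 0) (M 0 1 + M 1 0) (M 1 1) x y = 0) : x = 0 ∧ y = 0 := by
  by_contra hxy
  have hne : (![x, y, 0] : Fin 3 → A) ≠ 0 := by
    intro h0
    have e0 := congrFun h0 0
    have e1 := congrFun h0 1
    simp at e0 e1
    tauto
  have := (mem_iff M x y hne).mpr hb
  rw [h] at this
  exact this

lemma map_bin {A B : Type} [Field A] [Field B] (φ : A →+* B) (a b c x y : A) :
    φ (bin a b c x y) = bin (φ a) (φ b) (φ c) (φ x) (φ y) := by
  simp [bin]

lemma map_bin_sq {A B : Type} [Field A] [Field B] (φ : A →+* B) (a b c δ : A) (ha : a ≠ 0)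
    (h : ∀ x y, bin a b c x y = a * (x - δ * y) ^ 2) (x y : B) :
    bin (φ a) (φ b) (φ c) x y = 0 ↔ x = φ δ * y := by
  have e1 := congrArg φ (h 0 1)
  have e2 := congrArg φ (h 1 1)
  have ha' : φ a ≠ 0 := by simpa using ha
  simp [bin] at e1 e2
  have : bin (φ a) (φ b) (φ c) x y = φ a * (x - φ δ * y) ^ 2 := by
    unfold bin
    linear_combination (x * y) * e2 - (x * y) * e1 + y ^ 2 * e1
  rw [this]
  simp [ha', sub_eq_zero]

lemma map_bin_sq_none {A B : Type} [Field A] [Field B] (φ : A →+* B) (a b c : A) (hc : c ≠ 0)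
    (h : ∀ x y, bin a b c x y = c * y ^ 2) (x y : B) :
    bin (φ a) (φ b) (φ c) x y = 0 ↔ y = 0 := by
  have e1 := congrArg φ (h 1 0)
  have e2 := congrArg φ (h 1 1)
  have hc' : φ c ≠ 0 := by simpa using hc
  simp [bin] at e1 e2
  simp [bin, e1] at e2 ⊢
  simp [e2, hc']

lemma span_some {A : Type} [Field A] (d0 d1 t0 t1 : A) (v : Fin 5 → A) :
    v ∈ Submodule.span A {![d0, d1, 1, 0, 0], ![t0 * d1, d0 + t1 * d1, 0, 1, 0]} ↔
      v 4 = 0 ∧ v 0 - (d0 * v 2 + t0 * d1 * v 3) = 0 ∧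
        v 1 - (d1 * v 2 + (d0 + t1 * d1) * v 3) = 0 := by
  rw [Submodule.mem_span_pair]
  constructor
  · rintro ⟨a, b, rfl⟩
    simp
    constructor <;> ring
  · rintro ⟨h4, h0, h1⟩
    refine ⟨v 2, v 3, ?_⟩
    ext i
    fin_cases i <;> simp
    · linear_combination -h0
    · linear_combination -h1
    · exact h4.symm

lemma span_none {A : Type} [Field A] (v : Fin 5 → A) :
    v ∈ Submodule.span A {![1, 0, 0, 0, 0], ![0, 1, 0, 0, 0]} ↔
      v 4 = 0 ∧ v 2 = 0 ∧ v 3 = 0 := by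
  rw [Submodule.mem_span_pair]
  constructor
  · rintro ⟨a, b, rfl⟩
    simp
  · rintro ⟨h4, h0, h1⟩
    refine ⟨v 0, v 1, ?_⟩
    ext i
    fin_cases i <;> simp [h4, h0, h1]

/-- The vector `αA₀ + A₁`. -/
def uv {A : Type} [Field A] (α s : A) : Fin 5 → A := ![α * s, -α, s, -1, 0]

lemma span_uv {A : Type} [Field A] {s s' : A} (hs : s ≠ s') (α β : A) (v : Fin 5 → A) :
    v ∈ Submodule.span A {uv α s', uv β s} ↔
      v 4 = 0 ∧ v 0 + v 1 * s = α * (v 2 + v 3 * s) ∧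
        v 0 + v 1 * s' = β * (v 2 + v 3 * s') := by
  rw [Submodule.mem_span_pair]
  constructor
  · rintro ⟨a, b, rfl⟩
    simp [uv]
    constructor <;> ring
  · rintro ⟨h4, h0, h1⟩
    have hd : s' - s ≠ 0 := sub_ne_zero.mpr hs.symm
    refine ⟨(v 2 + v 3 * s) / (s' - s), -(v 2 + v 3 * s') / (s' - s), ?_⟩
    ext i
    fin_cases i <;> simp [uv]
    · field_simp
      linear_combination -s' * h0 + s * h1
    · field_simp
      linear_combination h0 - h1
    · field_simp
      ring
    · field_simp
      ring
    · exact h4.symm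

lemma bin_split {A : Type} [Field A] {a b c α β : A} (hαβ : α ≠ β) (ha : a ≠ 0)
    (h1 : bin a b c α 1 = 0) (h2 : bin a b c β 1 = 0) (x y : A) :
    bin a b c x y = 0 ↔ (x = α * y ∨ x = β * y) := by
  have hd : α - β ≠ 0 := sub_ne_zero.mpr hαβ
  unfold bin at *
  have e : (α - β) * (a * (α + β) + b) = 0 := by linear_combination h1 - h2
  have e' := (mul_eq_zero.mp e).resolve_left hd
  have : a * x ^ 2 + b * (x * y) + c * y ^ 2 = a * ((x - α * y) * (x - β * y)) := by
    linear_combination (x * y) * e' + y ^ 2 * h1 - α * y ^ 2 * e'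
  rw [this]
  simp [ha, sub_eq_zero]

/-- (i) For a conic `𝒪` tangent to `ℓ∞` at `P̄`, `[𝒪]` meets infinity exactly in `[P]`
(also over `GF(q²)`). (ii) For a conic exterior to `ℓ∞`, `[𝒪]` meets infinity in nothing
over `GF(q)` and `GF(q²)`, while over `GF(q⁴)` it meets `z = 0` exactly in the four
conjugate lines `ℓ_P, ℓ_P^q, ℓ_P^{q²}, ℓ_P^{q³}`. -/
theorem statement_10
    {F K : Type} [Field F] [Field K] [Fintype F] [Fintype K] [Algebra F K]
    (q : ℕ) (hq : Fintype.card F = q) (hK : Fintype.card K = q ^ 2)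
    (τ : K) (t0 t1 : F)
    (hτ : τ ^ 2 = algebraMap F K t1 * τ + algebraMap F K t0)
    (hτF : τ ∉ Set.range (algebraMap F K))
    (c0 c1 : K → F)
    (hc : ∀ x : K, x = algebraMap F K (c0 x) + algebraMap F K (c1 x) * τ)
    {L : Type} [Field L] [Fintype L] [Algebra K L] [Algebra F L] [IsScalarTower F K L]
    (hL : Fintype.card L = q ^ 4)
    (M : Matrix (Fin 3) (Fin 3) K)
    (hO : IsFq2Conic {p : PP K 3 | qeval M p.rep = 0})
    (Minf M0 : Matrix (Fin 5) (Fin 5) F)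
    (hdec : ∀ v : Fin 5 → F, qeval M (bbSubst F τ v) =
      algebraMap F K (qeval Minf v) + algebraMap F K (qeval M0 v) * τ) :
    (∀ tP : Option K, {p : PP K 3 | qeval M p.rep = 0} ∩ linf K = {ptInf tP} →
      {p : PP F 5 | qeval Minf p.rep = 0 ∧ qeval M0 p.rep = 0} ∩ sinf F
          = spreadLine c0 c1 t0 t1 tP ∧
      {p : PP K 5 | qeval (Minf.map (algebraMap F K)) p.rep = 0 ∧
          qeval (M0.map (algebraMap F K)) p.rep = 0} ∩ sinf K
          = extSpreadLine F c0 c1 t0 t1 tP) ∧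
    ({p : PP K 3 | qeval M p.rep = 0} ∩ linf K = ∅ →
      {p : PP F 5 | qeval Minf p.rep = 0 ∧ qeval M0 p.rep = 0} ∩ sinf F = ∅ ∧
      {p : PP K 5 | qeval (Minf.map (algebraMap F K)) p.rep = 0 ∧
          qeval (M0.map (algebraMap F K)) p.rep = 0} ∩ sinf K = ∅ ∧
      ∀ α : L, qeval (M.map (algebraMap K L)) ![α, 1, 0] = 0 →
        {p : PP L 5 | qeval (Minf.map (algebraMap F L)) p.rep = 0 ∧
            qeval (M0.map (algebraMap F L)) p.rep = 0} ∩ sinf L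
          = lpLine τ q α 0 ∪ lpLine τ q α 1 ∪ lpLine τ q α 2 ∪ lpLine τ q α 3) := by
  subst hq
  set q := Fintype.card F with hqdef
  have hτq : τ ≠ τ ^ q := fun h => hτF (aux_fixed τ h.symm)
  let frK : K →+* K := (FiniteField.frobeniusAlgHom F K).toRingHom
  have frK_apply : ∀ x, frK x = x ^ q := fun x => rfl
  have frK_F : ∀ x, frK (algebraMap F K x) = algebraMap F K x := fun x =>
    (FiniteField.frobeniusAlgHom F K).commutes x
  have infK : ∀ v : Fin 5 → K, v 4 = 0 → _ := fun v h4 =>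
    inf_iff τ M Minf M0 hdec (RingHom.id K) frK (algebraMap F K) (fun x => rfl) frK_F
      hτq v h4
  have infF : ∀ v : Fin 5 → F, v 4 = 0 → ((qeval Minf v = 0 ∧ qeval M0 v = 0) ↔
      bin (M 0 0) (M 0 1 + M 1 0) (M 1 1) (algebraMap F K (v 0) + algebraMap F K (v 1) * τ)
        (algebraMap F K (v 2) + algebraMap F K (v 3) * τ) = 0) := by
    intro v h4
    have h := hdec v
    rw [qeval3 _ _ (by simp [bbSubst, h4])] at h
    simp only [bbSubst, Matrix.cons_val_zero, Matrix.cons_val_one] at h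
    rw [h]
    constructor
    · rintro ⟨h1, h2⟩
      simp [h1, h2]
    · exact indepF hτF
  refine ⟨?_, ?_⟩
  · intro tP htP
    cases tP with
    | some δ =>
      obtain ⟨ha, hb⟩ := tang_some M δ htP
      have hδ := hc δ
      constructor
      · ext p
        simp only [Set.mem_inter_iff, Set.mem_ofPred_eq, sinf, spreadLine, ptsOf, spreadV1,
          spreadV2, span_some]
        rw [and_comm, and_congr_right_iff]
        intro h4
        rw [infF _ h4]
        rw [show ∀ x y, (bin (M 0 0) (M 0 1 + M 1 0) (M 1 1) x y = 0) = (x = δ * y) from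
          fun x y => propext (map_bin_sq (RingHom.id K) _ _ _ δ ha hb x y)]
        generalize c0 δ = d0 at *
        generalize c1 δ = d1 at *
        subst hδ
        constructor
        · intro h
          apply indepF hτF
          simp only [map_sub, map_add, map_mul]
          linear_combination h + algebraMap F K d1 * algebraMap F K (p.rep 3) * hτ
        · rintro ⟨h0, h1⟩
          have e0 := congrArg (algebraMap F K) h0
          have e1 := congrArg (algebraMap F K) h1
          simp only [map_sub, map_add, map_mul, map_zero] at e0 e1
          linear_combination e0 + τ * e1 - algebraMap F K d1 * algebraMap F K (p.rep 3) * hτ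
      · ext p
        have hv1 : algVec F (spreadV1 c0 c1 (some δ)) =
          ![algebraMap F K (c0 δ), algebraMap F K (c1 δ), 1, 0, 0] := by
          ext i; fin_cases i <;> simp [algVec, spreadV1]
        have hv2 : algVec F (spreadV2 c0 c1 t0 t1 (some δ)) =
          ![algebraMap F K t0 * algebraMap F K (c1 δ), algebraMap F K (c0 δ) +
            algebraMap F K t1 * algebraMap F K (c1 δ), 0, 1, 0] := by
          ext i; fin_cases i <;> simp [algVec, spreadV2]
        simp only [Set.mem_inter_iff, Set.mem_ofPred_eq, sinf, extSpreadLine, ptsOf, hv1, hv2,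
          span_some]
        rw [and_comm, and_congr_right_iff]
        intro h4
        rw [infK _ h4, map_bin_sq (RingHom.id K) _ _ _ δ ha hb, map_bin_sq frK _ _ _ δ ha hb]
        have hδ' := congrArg frK hδ
        have hτ' := congrArg frK hτ
        simp only [map_add, map_mul, map_pow, frK_F] at hδ' hτ'
        have hs : τ ≠ frK τ := hτq
        simp only [RingHom.id_apply]
        generalize frK δ = δ' at *
        generalize frK τ = τ' at *
        generalize c0 δ = d0 at *
        generalize c1 δ = d1 at *
        rw [hδ, hδ']
        constructor
        · rintro ⟨h, h'⟩
          apply indep2 hs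
          · linear_combination h + algebraMap F K d1 * (p.rep 3) * hτ
          · linear_combination h' + algebraMap F K d1 * (p.rep 3) * hτ'
        · rintro ⟨e0, e1⟩
          constructor
          · linear_combination e0 + τ * e1 - algebraMap F K d1 * (p.rep 3) * hτ
          · linear_combination e0 + τ' * e1 - algebraMap F K d1 * (p.rep 3) * hτ'
    | none =>
      obtain ⟨ha, hb⟩ := tang_none M htP
      constructor
      · ext p
        simp only [Set.mem_inter_iff, Set.mem_ofPred_eq, sinf, spreadLine, ptsOf, spreadV1,
          spreadV2, span_none]
        rw [and_comm, and_congr_right_iff]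
        intro h4
        rw [infF _ h4]
        rw [show ∀ x y, (bin (M 0 0) (M 0 1 + M 1 0) (M 1 1) x y = 0) = (y = 0) from
          fun x y => propext (map_bin_sq_none (RingHom.id K) _ _ _ ha hb x y)]
        constructor
        · intro h
          exact indepF hτF h
        · rintro ⟨h0, h1⟩
          simp [h0, h1]
      · ext p
        have hv1 : algVec F (spreadV1 c0 c1 none) = (![1, 0, 0, 0, 0] : Fin 5 → K) := by
          ext i; fin_cases i <;> simp [algVec, spreadV1]
        have hv2 : algVec F (spreadV2 c0 c1 t0 t1 none) = (![0, 1, 0, 0, 0] : Fin 5 → K) := by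
          ext i; fin_cases i <;> simp [algVec, spreadV2]
        simp only [Set.mem_inter_iff, Set.mem_ofPred_eq, sinf, extSpreadLine, ptsOf, hv1, hv2,
          span_none]
        rw [and_comm, and_congr_right_iff]
        intro h4
        rw [infK _ h4, map_bin_sq_none (RingHom.id K) _ _ _ ha hb,
          map_bin_sq_none frK _ _ _ ha hb]
        constructor
        · rintro ⟨h, h'⟩
          exact indep2 hτq h h'
        · rintro ⟨e0, e1⟩
          simp [e0, e1]
  · intro hemp
    have hroot := ext_root M hemp
    refine ⟨?_, ?_, ?_⟩
    · rw [Set.eq_empty_iff_forall_notMem]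
      rintro p ⟨hp, h4⟩
      have h4 : p.rep 4 = 0 := h4
      obtain ⟨hx, hy⟩ := hroot _ _ ((infF _ h4).mp hp)
      obtain ⟨h0, h1⟩ := indepF hτF hx
      obtain ⟨h2, h3⟩ := indepF hτF hy
      apply p.rep_nonzero
      ext i
      fin_cases i <;> simp [h0, h1, h2, h3, h4]
    · rw [Set.eq_empty_iff_forall_notMem]
      rintro p ⟨hp, h4⟩
      have h4 : p.rep 4 = 0 := h4
      obtain ⟨hb, hb'⟩ := (infK _ h4).mp hp
      obtain ⟨hx, hy⟩ := hroot _ _ hb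
      have hfr2 : ∀ x, frK (frK x) = x := by
        intro x
        rw [frK_apply, frK_apply, ← pow_mul, ← pow_two, ← hK, FiniteField.pow_card]
      have hb2 := congrArg frK hb'
      rw [map_bin] at hb2
      simp only [hfr2, map_zero] at hb2
      obtain ⟨hx', hy'⟩ := hroot _ _ hb2
      rw [map_eq_zero] at hx' hy'
      obtain ⟨h0, h1⟩ := indep2 hτq hx hx'
      obtain ⟨h2, h3⟩ := indep2 hτq hy hy'
      apply p.rep_nonzero
      ext i
      fin_cases i <;> simp [h0, h1, h2, h3, h4]
    · intro α hα
      rw [qeval3 _ _ (by simp)] at hα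
      simp only [Matrix.map_apply, Matrix.cons_val_zero, Matrix.cons_val_one] at hα
      rw [← map_add] at hα
      let fr : L →+* L := (FiniteField.frobeniusAlgHom F L).toRingHom
      let fr2 : L →+* L := (FiniteField.frobeniusAlgHom K L).toRingHom
      have fr_apply : ∀ x, fr x = x ^ q := fun x => rfl
      have fr2_apply : ∀ x, fr2 x = fr (fr x) := by
        intro x
        rw [fr_apply, fr_apply, ← pow_mul, ← pow_two, ← hK]
        rfl
      have fr4 : ∀ x, fr (fr (fr (fr x))) = x := by
        intro x
        simp only [fr_apply, ← pow_mul]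
        rw [show q * q * q * q = q ^ 4 by ring, ← hL, FiniteField.pow_card]
      have fr2_K : ∀ x, fr2 (algebraMap K L x) = algebraMap K L x := fun x =>
        (FiniteField.frobeniusAlgHom K L).commutes x
      have ha : M 0 0 ≠ 0 := by
        intro ha
        have := (hroot 1 0 (by simp [bin, ha])).1
        simp at this
      have hne : α ≠ fr (fr α) := by
        intro h
        rw [← fr2_apply] at h
        obtain ⟨k, rfl⟩ := aux_fixed (A := K) α h.symm
        rw [← map_one (algebraMap K L), ← map_bin, map_eq_zero] at hα
        exact one_ne_zero (hroot _ _ hα).2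
      have hα2 := congrArg fr2 hα
      rw [map_bin, map_zero, map_one] at hα2
      simp only [fr2_K] at hα2
      rw [fr2_apply] at hα2
      have hα1 := congrArg fr hα
      have hα3 := congrArg fr hα2
      rw [map_bin, map_zero, map_one] at hα1 hα3
      have hne' : fr α ≠ fr (fr (fr α)) := fun h => hne (fr.injective h)
      let s := algebraMap K L τ
      have hs : s ≠ fr s := by
        intro h
        have : algebraMap K L τ = algebraMap K L (τ ^ q) := by rw [map_pow]; exact h
        exact hτq ((algebraMap K L).injective this)
      have hs2 : fr (fr s) = s := by rw [← fr2_apply]; exact fr2_K τ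
      have hp : pVec τ q α = uv α (fr s) := by
        ext i
        fin_cases i <;> simp [pVec, uv, mapVec, A0v, A1v, fr_apply, s]
      have hconj : ∀ x y : L, conjVecL q (uv x y) = uv (fr x) (fr y) := by
        intro x y
        ext i
        change fr (uv x y i) = _
        fin_cases i <;> simp [uv]
      have hfrL : ∀ x, (fr.comp (algebraMap K L)) (algebraMap F K x) = algebraMap F L x := by
        intro x
        rw [RingHom.comp_apply, ← IsScalarTower.algebraMap_apply]
        exact (FiniteField.frobeniusAlgHom F L).commutes x
      ext p
      simp only [Set.mem_inter_iff, Set.mem_union, Set.mem_ofPred_eq, sinf, lpLine, ptsOf,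
        Function.iterate_succ, Function.iterate_zero, Function.comp_apply, id_eq, hp, hconj, hs2,
        fr4]
      rw [Set.pair_comm (uv (fr α) s), Set.pair_comm (uv (fr (fr (fr α))) s)]
      simp only [span_uv hs]
      by_cases h4 : p.rep 4 = 0
      · rw [inf_iff τ M Minf M0 hdec (algebraMap K L) (fr.comp (algebraMap K L)) (algebraMap F L)
          (fun x => (IsScalarTower.algebraMap_apply F K L x).symm) hfrL hs _ h4]
        rw [bin_split hne (by simpa using ha) hα hα2]
        simp only [RingHom.comp_apply]
        rw [bin_split hne' (by simpa using ha) hα1 hα3]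
        simp only [h4, s]
        tauto
      · simp [h4]

end BaerConics
end
end
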